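/- arXiv:2007.05885 — 2 statements merged into one kernel-verified Lean document; each statement's English description precedes it below -/
import Mathlib

section
/- The poset P of conditions satisfies the countable chain condition, even when the underlying model N of PA is uncountable: every antichain in P is countable. -/
open FirstOrder FirstOrder.Language

/-- Function symbols of the language of arithmetic: `0`, `1`, `+`, `·`. -/
inductive arithFunc : ℕ → Type
  | zero : arithFunc 0
  | one : arithFunc 0
  | add : arithFunc 2
  | mul : arithFunc 2
  deriving DecidableEq

/-- Relation symbols of the language of arithmetic: `<`. -/
inductive arithRel : ℕ → Type
  | lt : arithRel 2
  deriving DecidableEq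

/-- The first-order language of arithmetic `{0, 1, +, ·, <}`. -/
def arith : FirstOrder.Language := ⟨arithFunc, arithRel⟩

namespace Arith

variable {M : Type*} [arith.Structure M]

/-- The interpretation of `0`. -/
def zeroM (M : Type*) [arith.Structure M] : M :=
  Structure.funMap (L := arith) arithFunc.zero ![]

/-- The interpretation of `1`. -/
def oneM (M : Type*) [arith.Structure M] : M :=
  Structure.funMap (L := arith) arithFunc.one ![]

/-- The interpretation of `+`. -/
def addM (x y : M) : M := Structure.funMap (L := arith) arithFunc.add ![x, y]

/-- The interpretation of `·`. -/
def mulM (x y : M) : M := Structure.funMap (L := arith) arithFunc.mul ![x, y]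

/-- The interpretation of `<`. -/
def ltM (x y : M) : Prop := Structure.RelMap (L := arith) arithRel.lt ![x, y]

/-- Non-strict order. -/
def leM (x y : M) : Prop := ltM x y ∨ x = y

/-- The numeral `n` in `M`: `0`, or `1 + 1 + ⋯ + 1`. -/
def numeral (M : Type*) [arith.Structure M] : ℕ → M
  | 0 => zeroM M
  | n + 1 => addM (numeral M n) (oneM M)

/-- The standard `arith`-structure on `ℕ`. -/
instance : arith.Structure ℕ where
  funMap {n} f v :=
    match f with
    | .zero => 0
    | .one => 1
    | .add => v 0 + v 1
    | .mul => v 0 * v 1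
  RelMap {n} r v :=
    match r with
    | .lt => v 0 < v 1

/-- `M` is a model of Peano arithmetic: it satisfies the finitely many basic axioms of
`PA` together with induction for all parametrically definable sets (which is equivalent
to the usual first-order induction scheme). -/
def IsPAModel (M : Type*) [arith.Structure M] : Prop :=
  (∀ x : M, addM x (zeroM M) = x) ∧
  (∀ x y : M, addM x (addM y (oneM M)) = addM (addM x y) (oneM M)) ∧
  (∀ x : M, mulM x (zeroM M) = zeroM M) ∧
  (∀ x y : M, mulM x (addM y (oneM M)) = addM (mulM x y) x) ∧
  (∀ x : M, ¬ ltM x (zeroM M)) ∧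
  (∀ x y : M, ltM x (addM y (oneM M)) ↔ (ltM x y ∨ x = y)) ∧
  (∀ x : M, addM x (oneM M) ≠ zeroM M) ∧
  (∀ x y : M, addM x (oneM M) = addM y (oneM M) → x = y) ∧
  (∀ s : Set M, Set.Definable₁ (Set.univ : Set M) arith s →
    zeroM M ∈ s → (∀ x ∈ s, addM x (oneM M) ∈ s) → ∀ x : M, x ∈ s)

/-- An element of `M` is standard if it is a numeral. -/
def IsStd (x : M) : Prop := ∃ n : ℕ, x = numeral M n

/-- `M` is a non-standard model of `PA`: a model of `PA` not isomorphic to the standard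
model `ℕ`. -/
def NonstandardModel (M : Type*) [arith.Structure M] : Prop :=
  IsPAModel M ∧ ¬ Nonempty (M ≃[arith] ℕ)

/-- `(x)_i = 1`: the `i`-th binary digit of `x` is `1`, for standard `i`.  This is expressed
by saying that `x = u·2^(i+1) + (2^i + v)` with `v < 2^i`, where `2^i`, `2^(i+1)` are
numerals. -/
def digitB (x : M) (i : ℕ) : Prop :=
  ∃ u v : M, x = addM (mulM u (numeral M (2 ^ (i + 1)))) (addM (numeral M (2 ^ i)) v) ∧
    ltM v (numeral M (2 ^ i))

/-- The standard system of `M`: the collection of subsets of `ℕ` coded by some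
non-standard element of `M` (via its standard binary digits). -/
def SSy (M : Type*) [arith.Structure M] : Set (Set ℕ) :=
  {X | ∃ a : M, ¬ IsStd a ∧ ∀ i : ℕ, i ∈ X ↔ digitB a i}

/-- A function `M → M` is definable (with parameters) if its graph is a definable set. -/
def DefinableFun₁ (f : M → M) : Prop :=
  Set.Definable (Set.univ : Set M) arith {v : Fin 2 → M | f (v 0) = v 1}

/-- A `k`-ary function `M^k → M` is definable (with parameters) if its graph is a
definable set. -/
def DefinableFun {k : ℕ} (F : (Fin k → M) → M) : Prop :=
  Set.Definable (Set.univ : Set M) arith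
    {v : Fin (k + 1) → M | F (fun i => v i.castSucc) = v (Fin.last k)}

/-- `c` is the internal cardinality of the set `D ⊆ M`: there is an `M`-definable
bijection between `{x : x < c}` and `D`. -/
def InternalCard (D : Set M) (c : M) : Prop :=
  ∃ f : M → M, DefinableFun₁ f ∧ Set.BijOn f {x : M | ltM x c} D

/-- `y = 2^x` in the model `M`, expressed via the existence of a definable function
satisfying the recursion of the base-`2` exponential up to `x`. -/
def IsPow2 (x y : M) : Prop :=
  ∃ f : M → M, DefinableFun₁ f ∧ f (zeroM M) = oneM M ∧
    (∀ z : M, ltM z x → f (addM z (oneM M)) = addM (f z) (f z)) ∧ f x = y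

end Arith

namespace Arith

variable {N : Type*} [arith.Structure N]

/-- Formulas with constants for all elements of `N`, in free variables `x_σ` indexed by
binary sequences `σ ∈ 2^n`. -/
abbrev CFormula (N : Type*) [arith.Structure N] (n : ℕ) : Type _ :=
  (arith[[N]]).Formula (Fin n → Bool)

/-- `d^k` for standard `k`. -/
def powStd (d : N) : ℕ → N
  | 0 => oneM N
  | k + 1 => mulM (powStd d k) d

/-- The binary sequence of length `n` coded by `j < 2^n`. -/
def binOfFin {n : ℕ} (j : Fin (2 ^ n)) : Fin n → Bool := fun i => j.val.testBit i.val

/-- The code `∑_σ b_σ · d^(rank σ)` of a tuple `(b_σ : σ ∈ 2^n)` of elements below `d`,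
in base `d`. -/
def tupleCode (d : N) {n : ℕ} (b : (Fin n → Bool) → N) : N :=
  (List.finRange (2 ^ n)).foldr
    (fun j acc => addM (mulM (b (binOfFin j)) (powStd d j.val)) acc) (zeroM N)

/-- `b` realizes all formulas in `fmls`. -/
def RealizesAll {n : ℕ} (fmls : Set (CFormula N n)) (b : (Fin n → Bool) → N) : Prop :=
  ∀ φ ∈ fmls, φ.Realize b

/-- The set of codes of tuples realizing `fmls` in `N`; this represents the internal set
`p(N)` of realizations of a condition. -/
def realizationCodes (d : N) {n : ℕ} (fmls : Set (CFormula N n)) : Set N :=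
  {e | ∃ b : (Fin n → Bool) → N, RealizesAll fmls b ∧ e = tupleCode d b}

/-- A condition: a finite type `p` of `N` in the variables `(x_σ : σ ∈ 2^{n_p})`
(with parameters from `N`, and no quantifiers over any `x_σ`), such that `p ⊢ x_σ < d`
(where `d = 2^a`), and such that for some positive rational `r = u/v`, internally in `N`,
`|p(N)| > r · d^(2^{n_p})`. -/
structure Condition (N : Type*) [arith.Structure N] (d : N) : Type _ where
  n : ℕ
  fmls : Set (CFormula N n)
  finite : fmls.Finite
  realizable : ∃ b : (Fin n → Bool) → N, RealizesAll fmls b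
  bounded : ∀ b : (Fin n → Bool) → N, RealizesAll fmls b → ∀ σ : Fin n → Bool, ltM (b σ) d
  large : ∃ (u v : ℕ) (c : N), 0 < u ∧ 0 < v ∧
    InternalCard (realizationCodes d fmls) c ∧
    ltM (mulM (numeral N u) (powStd d (2 ^ n))) (mulM (numeral N v) c)

/-- The `m`-reduct of a formula in the variables `(x_σ : σ ∈ 2^n)`: substitute
`x_{σ↾m}` for `x_σ`. -/
def reduct {n m : ℕ} (h : m ≤ n) (φ : CFormula N n) : CFormula N m :=
  φ.relabel fun σ => fun i => σ (Fin.castLE h i)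

/-- The order on conditions: `q ≤ p` iff `n_q ≥ n_p` and `q` contains every
`n_q`-ramification of every formula in `p` (i.e. every formula whose `n_p`-reduct lies
in `p`). -/
def CondLE {d : N} (q p : Condition N d) : Prop :=
  ∃ h : p.n ≤ q.n, ∀ ψ : CFormula N q.n, reduct h ψ ∈ p.fmls → ψ ∈ q.fmls

/-- Formulas in the variables `(x_f : f ∈ 2^ω)` with constants from `N`. -/
abbrev CFormulaInf (N : Type*) [arith.Structure N] : Type _ :=
  (arith[[N]]).Formula (ℕ → Bool)

/-- The `m`-reduct of a formula in the variables `(x_f : f ∈ 2^ω)`: substitute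
`x_{f↾m}` for `x_f`. -/
def reductInf {m : ℕ} (φ : CFormulaInf N) : CFormula N m :=
  φ.relabel fun f => fun i => f i.val

end Arith

namespace Arith

section Definability

variable {N : Type*} [arith.Structure N] {α β : Type}

/-- A predicate on tuples that is definable with parameters. -/
def DefPred (P : (α → N) → Prop) : Prop :=
  Set.Definable (Set.univ : Set N) arith {v | P v}

/-- A function on tuples given by a term with parameters. -/
def DefTerm (t : (α → N) → N) : Prop :=
  ∃ τ : (arith[[(Set.univ : Set N)]]).Term α, ∀ v, τ.realize v = t v

/-- A binary relation that is definable with parameters. -/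
def DefRel (R : N → N → Prop) : Prop :=
  DefPred fun v : Fin 2 → N => R (v 0) (v 1)

theorem DefTerm.var (i : α) : DefTerm fun v : α → N => v i :=
  ⟨Term.var i, fun _ => rfl⟩

theorem DefTerm.const (c : N) : DefTerm fun _ : α → N => c :=
  ⟨(arith.con (⟨c, trivial⟩ : (Set.univ : Set N))).term, fun _ => Term.realize_con⟩

theorem DefTerm.addM {s t : (α → N) → N} (hs : DefTerm s) (ht : DefTerm t) :
    DefTerm fun v => addM (s v) (t v) := by
  obtain ⟨σ, hσ⟩ := hs
  obtain ⟨τ, hτ⟩ := ht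
  refine ⟨Functions.apply₂ (L := arith[[(Set.univ : Set N)]])
    ((arith.lhomWithConstants _).onFunction (arithFunc.add : arith.Functions 2)) σ τ,
    fun v => ?_⟩
  rw [Term.realize_functions_apply₂, hσ, hτ]
  rfl

theorem DefTerm.mulM {s t : (α → N) → N} (hs : DefTerm s) (ht : DefTerm t) :
    DefTerm fun v => mulM (s v) (t v) := by
  obtain ⟨σ, hσ⟩ := hs
  obtain ⟨τ, hτ⟩ := ht
  refine ⟨Functions.apply₂ (L := arith[[(Set.univ : Set N)]])
    ((arith.lhomWithConstants _).onFunction (arithFunc.mul : arith.Functions 2)) σ τ,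
    fun v => ?_⟩
  rw [Term.realize_functions_apply₂, hσ, hτ]
  rfl

theorem DefPred.eq {s t : (α → N) → N} (hs : DefTerm s) (ht : DefTerm t) :
    DefPred fun v => s v = t v := by
  obtain ⟨σ, hσ⟩ := hs
  obtain ⟨τ, hτ⟩ := ht
  refine ⟨σ.equal τ, ?_⟩
  ext v
  simp [hσ, hτ]

theorem DefPred.ltM {s t : (α → N) → N} (hs : DefTerm s) (ht : DefTerm t) :
    DefPred fun v => ltM (s v) (t v) := by
  obtain ⟨σ, hσ⟩ := hs
  obtain ⟨τ, hτ⟩ := ht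
  refine ⟨Relations.formula₂ (L := arith[[(Set.univ : Set N)]])
    ((arith.lhomWithConstants _).onRelation (arithRel.lt : arith.Relations 2)) σ τ, ?_⟩
  ext v
  change _ ↔ Formula.Realize _ v
  rw [Formula.realize_rel₂, hσ, hτ]
  rfl

theorem DefPred.and {P Q : (α → N) → Prop} (hP : DefPred P) (hQ : DefPred Q) :
    DefPred fun v => P v ∧ Q v :=
  Set.Definable.inter hP hQ

theorem DefPred.or {P Q : (α → N) → Prop} (hP : DefPred P) (hQ : DefPred Q) :
    DefPred fun v => P v ∨ Q v :=
  Set.Definable.union hP hQ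

theorem DefPred.not {P : (α → N) → Prop} (hP : DefPred P) : DefPred fun v => ¬ P v :=
  Set.Definable.compl hP

theorem DefPred.congr {P Q : (α → N) → Prop} (hP : DefPred P) (h : ∀ v, Q v ↔ P v) :
    DefPred Q := by
  rwa [show Q = P from funext fun v => propext (h v)]

theorem DefPred.imp {P Q : (α → N) → Prop} (hP : DefPred P) (hQ : DefPred Q) :
    DefPred fun v => P v → Q v :=
  (hP.not.or hQ).congr fun _ => imp_iff_not_or

theorem DefPred.iff {P Q : (α → N) → Prop} (hP : DefPred P) (hQ : DefPred Q) :
    DefPred fun v => P v ↔ Q v :=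
  ((hP.imp hQ).and (hQ.imp hP)).congr fun _ => iff_def

theorem DefPred.ex {P : (α → N) → N → Prop}
    (hP : DefPred fun w : Option α → N => P (fun i => w (some i)) (w none)) :
    DefPred fun v => ∃ x, P v x := by
  obtain ⟨φ, hφ⟩ := hP
  refine ⟨(BoundedFormula.relabel
    (fun o : Option α => (o.elim (Sum.inr 0) Sum.inl : α ⊕ Fin 1)) φ).ex, ?_⟩
  ext v
  change (∃ x, P v x) ↔ BoundedFormula.Realize _ v _
  rw [BoundedFormula.realize_ex]
  refine exists_congr fun x => ?_
  rw [BoundedFormula.realize_relabel]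
  have h := Set.ext_iff.1 hφ fun o : Option α => o.elim x v
  refine h.trans ?_
  change BoundedFormula.Realize _ _ _ ↔ _
  have h1 : (fun o : Option α => o.elim x v) =
      (Sum.elim v ((Fin.snoc default x : Fin 1 → N) ∘ Fin.castAdd 0)) ∘
        (fun o : Option α => (o.elim (Sum.inr 0) Sum.inl : α ⊕ Fin 1)) := by
    funext o
    cases o <;> rfl
  rw [← h1]
  exact iff_of_eq (congrArg _ (Subsingleton.elim _ _))

theorem DefPred.all {P : (α → N) → N → Prop}
    (hP : DefPred fun w : Option α → N => P (fun i => w (some i)) (w none)) :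
    DefPred fun v => ∀ x, P v x :=
  (DefPred.ex (P := fun v x => ¬ P v x) hP.not).not.congr fun _ => by simp

theorem DefPred.comp {P : (β → N) → Prop} (hP : DefPred P) {t : β → (α → N) → N}
    (ht : ∀ i, DefTerm (t i)) : DefPred fun v => P fun i => t i v := by
  obtain ⟨φ, hφ⟩ := hP
  choose τ hτ using ht
  refine ⟨φ.subst τ, ?_⟩
  ext v
  refine (Set.ext_iff.1 hφ fun i => t i v).trans ?_
  change φ.Realize _ ↔ BoundedFormula.Realize _ _ _
  rw [BoundedFormula.realize_subst]
  simp only [hτ]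
  rfl

theorem DefPred.mem {S : Set N} (hS : Set.Definable₁ (Set.univ : Set N) arith S)
    {t : (α → N) → N} (ht : DefTerm t) : DefPred fun v => t v ∈ S :=
  DefPred.comp (P := fun v : Fin 1 → N => v 0 ∈ S) hS (t := fun _ => t) fun _ => ht

theorem DefRel.comp {R : N → N → Prop} (hR : DefRel R) {s t : (α → N) → N} (hs : DefTerm s)
    (ht : DefTerm t) : DefPred fun v => R (s v) (t v) :=
  DefPred.comp (P := fun v : Fin 2 → N => R (v 0) (v 1)) hR (t := ![s, t])
    fun i => by fin_cases i <;> assumption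

end Definability

/-- Proves definability of a predicate by following its syntactic structure. -/
theorem DefPred.of_structure {N : Type*} [arith.Structure N] {α : Type} {P : (α → N) → Prop}
    (h : DefPred P := by
      repeat' first
        | assumption
        | exact DefTerm.const _
        | exact DefTerm.var _
        | refine DefTerm.addM ?_ ?_
        | refine DefTerm.mulM ?_ ?_
        | refine DefPred.eq ?_ ?_
        | refine DefPred.ltM ?_ ?_
        | refine DefPred.and ?_ ?_
        | refine DefPred.or ?_ ?_
        | refine DefPred.not ?_
        | refine DefPred.iff ?_ ?_
        | refine DefPred.imp ?_ ?_
        | refine DefPred.ex ?_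
        | refine DefPred.all ?_) : DefPred P := h

section Semiring

variable {N : Type*} [arith.Structure N] [hN : Fact (IsPAModel N)]

theorem pa_induction {P : N → Prop} (hP : DefPred fun v : Fin 1 → N => P (v 0))
    (zero : P (zeroM N)) (succ : ∀ x, P x → P (addM x (oneM N))) (x : N) : P x :=
  hN.out.2.2.2.2.2.2.2.2 {x | P x} hP zero succ x

theorem addM_zeroM (x : N) : addM x (zeroM N) = x := hN.out.1 x

theorem addM_succ (x y : N) : addM x (addM y (oneM N)) = addM (addM x y) (oneM N) :=
  hN.out.2.1 x y

theorem mulM_zeroM (x : N) : mulM x (zeroM N) = zeroM N := hN.out.2.2.1 x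

theorem mulM_succ (x y : N) : mulM x (addM y (oneM N)) = addM (mulM x y) x := hN.out.2.2.2.1 x y

theorem not_ltM_zeroM (x : N) : ¬ ltM x (zeroM N) := hN.out.2.2.2.2.1 x

theorem ltM_succ_iff (x y : N) : ltM x (addM y (oneM N)) ↔ (ltM x y ∨ x = y) :=
  hN.out.2.2.2.2.2.1 x y

theorem succ_ne_zeroM (x : N) : addM x (oneM N) ≠ zeroM N := hN.out.2.2.2.2.2.2.1 x

theorem succ_injective {x y : N} (h : addM x (oneM N) = addM y (oneM N)) : x = y :=
  hN.out.2.2.2.2.2.2.2.1 x y h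

theorem zeroM_addM (x : N) : addM (zeroM N) x = x := by
  induction x using pa_induction with
  | hP => exact DefPred.of_structure
  | zero => exact addM_zeroM _
  | succ x ih => rw [addM_succ, ih]

theorem succ_addM (x y : N) : addM (addM x (oneM N)) y = addM (addM x y) (oneM N) := by
  induction y using pa_induction with
  | hP => exact DefPred.of_structure
  | zero => simp only [addM_zeroM]
  | succ y ih => rw [addM_succ, ih, addM_succ]

theorem addM_comm (x y : N) : addM x y = addM y x := by
  induction y using pa_induction with
  | hP => exact DefPred.of_structure
  | zero => rw [addM_zeroM, zeroM_addM]
  | succ y ih => rw [addM_succ, ih, succ_addM]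

theorem addM_assoc (x y z : N) : addM (addM x y) z = addM x (addM y z) := by
  induction z using pa_induction with
  | hP => exact DefPred.of_structure
  | zero => simp only [addM_zeroM]
  | succ z ih => simp only [addM_succ, ih]

theorem zeroM_mulM (x : N) : mulM (zeroM N) x = zeroM N := by
  induction x using pa_induction with
  | hP => exact DefPred.of_structure
  | zero => exact mulM_zeroM _
  | succ x ih => rw [mulM_succ, ih, addM_zeroM]

theorem succ_mulM (x y : N) : mulM (addM x (oneM N)) y = addM (mulM x y) y := by
  induction y using pa_induction with
  | hP => exact DefPred.of_structure
  | zero => simp only [mulM_zeroM, addM_zeroM]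
  | succ y ih =>
    rw [mulM_succ, ih, mulM_succ, addM_assoc, addM_assoc, addM_succ y x, addM_succ x y,
      addM_comm y x]

theorem mulM_comm (x y : N) : mulM x y = mulM y x := by
  induction y using pa_induction with
  | hP => exact DefPred.of_structure
  | zero => rw [mulM_zeroM, zeroM_mulM]
  | succ y ih => rw [mulM_succ, ih, succ_mulM]

theorem mulM_addM (x y z : N) : mulM x (addM y z) = addM (mulM x y) (mulM x z) := by
  induction z using pa_induction with
  | hP => exact DefPred.of_structure
  | zero => simp only [addM_zeroM, mulM_zeroM]
  | succ z ih => rw [addM_succ, mulM_succ, ih, mulM_succ, addM_assoc]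

theorem mulM_assoc (x y z : N) : mulM (mulM x y) z = mulM x (mulM y z) := by
  induction z using pa_induction with
  | hP => exact DefPred.of_structure
  | zero => simp only [mulM_zeroM]
  | succ z ih => rw [mulM_succ, ih, mulM_succ, mulM_addM]

theorem mulM_oneM (x : N) : mulM x (oneM N) = x := by
  rw [← zeroM_addM (oneM N), mulM_succ, mulM_zeroM, zeroM_addM]

theorem eq_zeroM_or_succ (x : N) : x = zeroM N ∨ ∃ y, x = addM y (oneM N) := by
  induction x using pa_induction with
  | hP => exact DefPred.of_structure
  | zero => exact Or.inl rfl
  | succ x _ => exact Or.inr ⟨x, rfl⟩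

theorem addM_right_cancel {x y : N} (z : N) (h : addM x z = addM y z) : x = y := by
  induction z using pa_induction with
  | hP => exact DefPred.of_structure
  | zero => rwa [addM_zeroM, addM_zeroM] at h
  | succ z ih =>
    rw [addM_succ, addM_succ] at h
    exact ih (succ_injective h)

theorem ltM_iff_exists (x y : N) : ltM x y ↔ ∃ z, y = addM x (addM z (oneM N)) := by
  induction y using pa_induction with
  | hP => exact DefPred.of_structure
  | zero =>
    refine iff_of_false (not_ltM_zeroM x) ?_
    rintro ⟨z, hz⟩
    rw [addM_succ] at hz
    exact succ_ne_zeroM _ hz.symm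
  | succ y ih =>
    rw [ltM_succ_iff, ih]
    constructor
    · rintro (⟨z, rfl⟩ | rfl)
      · exact ⟨addM z (oneM N), (addM_succ _ _).symm⟩
      · exact ⟨zeroM N, by rw [zeroM_addM]⟩
    · rintro ⟨z, hz⟩
      rw [addM_succ] at hz
      have h := succ_injective hz
      rcases eq_zeroM_or_succ z with rfl | ⟨w, rfl⟩
      · exact Or.inr (by rw [h, addM_zeroM])
      · exact Or.inl ⟨w, h⟩

theorem leM_iff_exists (x y : N) : leM x y ↔ ∃ z, y = addM x z := by
  rw [leM, ltM_iff_exists]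
  constructor
  · rintro (⟨z, hz⟩ | rfl)
    · exact ⟨_, hz⟩
    · exact ⟨zeroM N, (addM_zeroM _).symm⟩
  · rintro ⟨z, hz⟩
    rcases eq_zeroM_or_succ z with rfl | ⟨w, rfl⟩
    · exact Or.inr (by rw [hz, addM_zeroM])
    · exact Or.inl ⟨w, hz⟩

theorem leM_total (x y : N) : leM x y ∨ leM y x := by
  induction y using pa_induction with
  | hP =>
    unfold leM
    exact DefPred.of_structure
  | zero => exact Or.inr ((leM_iff_exists _ _).2 ⟨x, (zeroM_addM x).symm⟩)
  | succ y ih =>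
    rcases ih with h | h
    · exact Or.inl (Or.inl ((ltM_succ_iff _ _).2 h))
    · obtain ⟨z, rfl⟩ := (leM_iff_exists _ _).1 h
      rcases eq_zeroM_or_succ z with rfl | ⟨w, rfl⟩
      · rw [addM_zeroM]
        exact Or.inl (Or.inl ((ltM_succ_iff _ _).2 (Or.inr rfl)))
      · exact Or.inr ((leM_iff_exists _ _).2 ⟨w, by rw [addM_succ, succ_addM]⟩)

theorem addM_eq_zeroM {x y : N} (h : addM x y = zeroM N) : y = zeroM N := by
  rcases eq_zeroM_or_succ y with rfl | ⟨w, rfl⟩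
  · rfl
  · rw [addM_succ] at h
    exact absurd h (succ_ne_zeroM _)

theorem leM_antisymm {x y : N} (hxy : leM x y) (hyx : leM y x) : x = y := by
  obtain ⟨z, rfl⟩ := (leM_iff_exists _ _).1 hxy
  obtain ⟨w, hw⟩ := (leM_iff_exists _ _).1 hyx
  have h : addM (addM z w) x = addM (zeroM N) x := by
    rw [zeroM_addM, addM_comm, ← addM_assoc, ← hw]
  have h0 := addM_right_cancel x h
  rw [addM_comm] at h0
  rw [addM_eq_zeroM h0, addM_zeroM]

theorem leM_trans {x y z : N} (hxy : leM x y) (hyz : leM y z) : leM x z := by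
  obtain ⟨u, rfl⟩ := (leM_iff_exists _ _).1 hxy
  obtain ⟨w, rfl⟩ := (leM_iff_exists _ _).1 hyz
  exact (leM_iff_exists _ _).2 ⟨_, addM_assoc _ _ _⟩

theorem ltM_irrefl (x : N) : ¬ ltM x x := by
  rw [ltM_iff_exists]
  rintro ⟨z, hz⟩
  refine succ_ne_zeroM z (addM_right_cancel x ?_)
  rw [zeroM_addM, addM_comm, ← hz]

/-- A model of arithmetic as a commutative semiring. -/
instance : CommSemiring N where
  add := addM
  zero := zeroM N
  mul := mulM
  one := oneM N
  add_assoc := addM_assoc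
  zero_add := zeroM_addM
  add_zero := addM_zeroM
  add_comm := addM_comm
  nsmul n x := mulM (numeral N n) x
  nsmul_zero := zeroM_mulM
  nsmul_succ n x := succ_mulM (numeral N n) x
  left_distrib := mulM_addM
  right_distrib x y z := by
    change mulM (addM x y) z = addM (mulM x z) (mulM y z)
    rw [mulM_comm, mulM_addM, mulM_comm z x, mulM_comm z y]
  zero_mul := zeroM_mulM
  mul_zero := mulM_zeroM
  mul_assoc := mulM_assoc
  one_mul x := (mulM_comm _ _).trans (mulM_oneM x)
  mul_one := mulM_oneM
  mul_comm := mulM_comm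
  natCast := numeral N
  natCast_zero := rfl
  natCast_succ _ := rfl
  npow n x := powStd x n
  npow_zero _ := rfl
  npow_succ _ _ := rfl

open Classical in
/-- The linear order of a model of arithmetic. -/
noncomputable instance : LinearOrder N where
  le := leM
  lt := ltM
  le_refl _ := Or.inr rfl
  le_trans _ _ _ := leM_trans
  le_antisymm _ _ := leM_antisymm
  lt_iff_le_not_ge x y := by
    refine ⟨fun h => ⟨Or.inl h, fun h' => ltM_irrefl x ?_⟩, ?_⟩
    · rwa [← leM_antisymm (Or.inl h) h'] at h
    · rintro ⟨h | rfl, h'⟩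
      · exact h
      · exact absurd (Or.inr rfl) h'
  le_total := leM_total
  toDecidableLE := Classical.decRel _

instance : IsOrderedCancelAddMonoid N where
  add_le_add_left x y h z := by
    obtain ⟨w, rfl⟩ := (leM_iff_exists _ _).1 h
    exact (leM_iff_exists _ _).2 ⟨w, add_right_comm x w z⟩
  le_of_add_le_add_left x y z h := by
    obtain ⟨w, hw⟩ := (leM_iff_exists _ _).1 h
    refine (leM_iff_exists _ _).2 ⟨w, addM_right_cancel x ?_⟩
    rw [addM_comm, addM_comm _ x, ← addM_assoc]
    exact hw

instance : CanonicallyOrderedAdd N where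
  exists_add_of_le h := (leM_iff_exists _ _).1 h
  le_self_add _ y := (leM_iff_exists _ _).2 ⟨y, rfl⟩
  le_add_self _ y := (leM_iff_exists _ _).2 ⟨y, addM_comm _ _⟩

instance : Nontrivial N := ⟨0, 1, fun h => succ_ne_zeroM (zeroM N) ((zeroM_addM _).trans h.symm)⟩

theorem lt_succ_iff {x y : N} : x < y + 1 ↔ x ≤ y := ltM_succ_iff x y

theorem succ_le_iff {x y : N} : x + 1 ≤ y ↔ x < y := by
  rw [← lt_succ_iff, add_lt_add_iff_right]

instance : NoZeroDivisors N where
  eq_zero_or_eq_zero_of_mul_eq_zero {x y} h := by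
    rcases eq_zeroM_or_succ y with rfl | ⟨w, rfl⟩
    · exact Or.inr rfl
    · exact Or.inl (addM_eq_zeroM ((mulM_succ x w).symm.trans h))

theorem mul_lt_mul_left_of_pos {x y z : N} (hx : 0 < x) (h : y < z) : x * y < x * z := by
  obtain ⟨w, rfl⟩ := exists_add_of_le h.le
  rw [mul_add, lt_add_iff_pos_right, pos_iff_ne_zero]
  exact mul_ne_zero hx.ne' fun h0 => by simp [h0] at h

instance : IsStrictOrderedRing N where
  zero_le_one := zero_le
  mul_lt_mul_of_pos_left _ hx _ _ h := mul_lt_mul_left_of_pos hx h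
  mul_lt_mul_of_pos_right x hx y z h := by
    rw [mul_comm y, mul_comm z]
    exact mul_lt_mul_left_of_pos hx h

end Semiring

variable {N : Type*} [arith.Structure N] [hN : Fact (IsPAModel N)] {α : Type}

section DefinabilityOfArithmetic

theorem DefTerm.add {s t : (α → N) → N} (hs : DefTerm s) (ht : DefTerm t) :
    DefTerm fun v => s v + t v :=
  hs.addM ht

theorem DefTerm.mul {s t : (α → N) → N} (hs : DefTerm s) (ht : DefTerm t) :
    DefTerm fun v => s v * t v :=
  hs.mulM ht

theorem DefPred.lt {s t : (α → N) → N} (hs : DefTerm s) (ht : DefTerm t) :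
    DefPred fun v => s v < t v :=
  DefPred.ltM hs ht

theorem DefPred.le {s t : (α → N) → N} (hs : DefTerm s) (ht : DefTerm t) :
    DefPred fun v => s v ≤ t v :=
  ((DefPred.lt hs ht).or (DefPred.eq hs ht)).congr fun _ => le_iff_lt_or_eq

theorem DefPred.dvd {s t : (α → N) → N} (hs : DefTerm s) (ht : DefTerm t) :
    DefPred fun v => s v ∣ t v := by
  obtain ⟨σ, hσ⟩ := hs
  obtain ⟨τ, hτ⟩ := ht
  refine DefPred.ex (P := fun v x => t v = s v * x) (DefPred.eq ?_ (DefTerm.mul ?_ (.var _)))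
  · exact ⟨τ.relabel some, fun v => by rw [Term.realize_relabel, hτ]; rfl⟩
  · exact ⟨σ.relabel some, fun v => by rw [Term.realize_relabel, hσ]; rfl⟩

/-- The set coded by the pair `(a, b)`, by divisibility of `a` by members of an arithmetic
progression. -/
def Coded (a b i : N) : Prop := 1 + (i + 1) * b ∣ a

/-- The binary relation on `{i | i < B}` coded by the pair `(a, b)`. -/
def CodedRel (a b B i y : N) : Prop := Coded a b (i * B + y)

/-- Proves definability of an arithmetical predicate by following its syntactic structure. -/
theorem DefPred.of_arith {N : Type*} [arith.Structure N] {P : (α → N) → Prop}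
    (h : DefPred P := by
      repeat' first
        | assumption
        | exact DefTerm.const _
        | exact DefTerm.var _
        | refine DefTerm.add ?_ ?_
        | refine DefTerm.mul ?_ ?_
        | refine DefPred.eq ?_ ?_
        | refine DefPred.lt ?_ ?_
        | refine DefPred.le ?_ ?_
        | refine DefPred.dvd ?_ ?_
        | refine DefPred.and ?_ ?_
        | refine DefPred.or ?_ ?_
        | refine DefPred.not ?_
        | refine DefPred.iff ?_ ?_
        | refine DefPred.mem ?_ ?_
        | refine DefRel.comp ?_ ?_ ?_
        | refine DefPred.imp ?_ ?_
        | refine DefPred.ex ?_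
        | refine DefPred.all ?_) : DefPred P := h

theorem induction_of_definable {P : N → Prop} (hP : DefPred fun v : Fin 1 → N => P (v 0))
    (zero : P 0) (succ : ∀ x, P x → P (x + 1)) (x : N) : P x :=
  pa_induction hP zero succ x

end DefinabilityOfArithmetic

section Coding

theorem exists_common_multiple (n : N) : ∃ b, b ≠ 0 ∧ ∀ j, j ≠ 0 → j ≤ n → j ∣ b := by
  induction n using induction_of_definable with
  | hP => exact DefPred.of_arith
  | zero => exact ⟨1, one_ne_zero, fun j h0 h => absurd (le_zero_iff.1 h) h0⟩
  | succ n ih =>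
    obtain ⟨b, hb, h⟩ := ih
    refine ⟨b * (n + 1), mul_ne_zero hb (by simp), fun j h0 hj => ?_⟩
    rcases hj.lt_or_eq with hj | rfl
    · exact (h j h0 (lt_succ_iff.1 hj)).mul_right _
    · exact dvd_mul_left _ _

theorem dvd_right_of_dvd_add {m x y : N} (h : m ∣ x + y) (hx : m ∣ x) : m ∣ y := by
  obtain ⟨k, hk⟩ := h
  obtain ⟨l, rfl⟩ := hx
  rcases le_total l k with h | h
  · obtain ⟨t, rfl⟩ := exists_add_of_le h
    rw [mul_add, add_right_inj] at hk
    exact ⟨t, hk⟩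
  · obtain ⟨t, rfl⟩ := exists_add_of_le h
    have : m * t + y = 0 := by
      rwa [mul_add, add_assoc, add_eq_left] at hk
    rw [add_eq_zero] at this
    simp [this.2]

theorem dvd_of_dvd_progression_mul {b n i j z : N} (hb : ∀ k, k ≠ 0 → k ≤ n → k ∣ b)
    (hi : i ≤ n) (hj : j ≤ n) (hij : i ≠ j)
    (h : 1 + (i + 1) * b ∣ (1 + (j + 1) * b) * z) : 1 + (i + 1) * b ∣ z := by
  suffices h1 : 1 + (i + 1) * b ∣ b * z by
    refine dvd_right_of_dvd_add (x := (i + 1) * (b * z)) ?_ (h1.mul_left _)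
    exact ⟨z, by ring⟩
  rcases hij.lt_or_gt with hlt | hlt
  · obtain ⟨k, rfl⟩ := exists_add_of_le hlt.le
    have hk : k ≠ 0 := fun h0 => by simp [h0] at hlt
    obtain ⟨l, hl⟩ := hb k hk (le_add_self.trans hj)
    have h2 : 1 + (i + 1) * b ∣ k * z := by
      refine dvd_right_of_dvd_add (x := (i + 1) * ((1 + (i + k + 1) * b) * z)) ?_ (h.mul_left _)
      exact ⟨(i + k + 1) * z, by ring⟩
    rw [hl] at h2 ⊢
    exact (h2.mul_left l).trans ⟨1, by ring⟩
  · obtain ⟨k, rfl⟩ := exists_add_of_le hlt.le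
    have hk : k ≠ 0 := fun h0 => by simp [h0] at hlt
    obtain ⟨l, hl⟩ := hb k hk (le_add_self.trans hi)
    have h2 : 1 + (j + k + 1) * b ∣ k * z := by
      refine dvd_right_of_dvd_add (x := (1 + (j + k + 1) * b) * ((j + 1) * z)) ?_ ⟨_, rfl⟩
      have h3 := h.mul_left (j + k + 1)
      convert h3 using 1
      ring
    rw [hl] at h2 ⊢
    exact (h2.mul_left l).trans ⟨1, by ring⟩

theorem exists_coded {S : Set N} (hS : Set.Definable₁ (Set.univ : Set N) arith S) (n : N) :
    ∃ a b, ∀ i < n, Coded a b i ↔ i ∈ S := by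
  obtain ⟨b, hb0, hb⟩ := exists_common_multiple n
  have key (x : N) : ∃ a, ∀ i ≤ n, (i ∈ S ∧ i < x → 1 + (i + 1) * b ∣ a) ∧
      (¬ (i ∈ S ∧ i < x) → ∀ z, 1 + (i + 1) * b ∣ a * z → 1 + (i + 1) * b ∣ z) := by
    induction x using induction_of_definable with
    | hP => exact DefPred.of_arith
    | zero => exact ⟨1, fun i _ => ⟨fun h => absurd h.2 not_lt_zero, fun _ z h => by simpa using h⟩⟩
    | succ x ih =>
      obtain ⟨a, ha⟩ := ih
      by_cases hx : x ∈ S ∧ x ≤ n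
      · refine ⟨(1 + (x + 1) * b) * a, fun i hi => ⟨fun h => ?_, fun h z hz => ?_⟩⟩
        · rcases (lt_succ_iff.1 h.2).lt_or_eq with hix | rfl
          · exact ((ha i hi).1 ⟨h.1, hix⟩).mul_left _
          · exact dvd_mul_right _ _
        · have hne : i ≠ x := by
            rintro rfl
            exact h ⟨hx.1, lt_succ_iff.2 le_rfl⟩
          rw [mul_assoc] at hz
          exact (ha i hi).2 (fun h' => h ⟨h'.1, lt_succ_iff.2 h'.2.le⟩) z
            (dvd_of_dvd_progression_mul hb hi hx.2 hne hz)
      · refine ⟨a, fun i hi => ?_⟩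
        have : i ∈ S ∧ i < x + 1 ↔ i ∈ S ∧ i < x := by
          refine and_congr_right fun hiS => ⟨fun h => ?_, fun h => lt_succ_iff.2 h.le⟩
          refine (lt_succ_iff.1 h).lt_of_ne ?_
          rintro rfl
          exact hx ⟨hiS, hi⟩
        rw [this]
        exact ha i hi
  obtain ⟨a, ha⟩ := key n
  refine ⟨a, b, fun i hi => ⟨fun h => ?_, fun h => (ha i hi.le).1 ⟨h, hi⟩⟩⟩
  by_contra hiS
  have h1 := (ha i hi.le).2 (fun h => hiS h.1) 1 (by rwa [mul_one])
  obtain ⟨k, hk⟩ := h1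
  have hk0 : k ≠ 0 := by
    rintro rfl
    simp at hk
  have h2 : 1 + (i + 1) * b ≤ 1 := by
    conv_rhs => rw [hk]
    exact le_mul_of_one_le_right zero_le (by simpa using succ_le_iff.2 (pos_iff_ne_zero.2 hk0))
  have h3 : (i + 1) * b = 0 := by
    simpa using h2
  simp [hb0] at h3

theorem mul_add_inj {B i i' y y' : N} (hy : y < B) (hy' : y' < B)
    (h : i * B + y = i' * B + y') : i = i' ∧ y = y' := by
  have aux {i i' y y' : N} (hy : y < B) (h : i * B + y = i' * B + y') : i' ≤ i := by
    by_contra! hlt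
    refine h.not_lt ?_
    calc i * B + y < i * B + B := by gcongr
      _ = (i + 1) * B := by ring
      _ ≤ i' * B := by gcongr; exact succ_le_iff.2 hlt
      _ ≤ i' * B + y' := le_self_add
  have hi : i = i' := le_antisymm (aux hy' h.symm) (aux hy h)
  subst hi
  exact ⟨rfl, add_left_cancel h⟩

theorem exists_codedRel {R : N → N → Prop} (hR : DefRel R) (B : N) :
    ∃ a b, ∀ i < B, ∀ y < B, CodedRel a b B i y ↔ R i y := by
  have hS : Set.Definable₁ (Set.univ : Set N) arith
      {e | ∃ i y, y < B ∧ e = i * B + y ∧ R i y} :=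
    DefPred.of_arith (P := fun v : Fin 1 → N => ∃ i y, y < B ∧ v 0 = i * B + y ∧ R i y)
  obtain ⟨a, b, h⟩ := exists_coded hS (B * B)
  refine ⟨a, b, fun i hi y hy => (h _ ?_).trans ⟨?_, fun hR => ⟨i, y, hy, rfl, hR⟩⟩⟩
  · calc i * B + y < i * B + B := by gcongr
      _ = (i + 1) * B := by ring
      _ ≤ B * B := by gcongr; exact succ_le_iff.2 hi
  · rintro ⟨i', y', hy', he, hR⟩
    obtain ⟨rfl, rfl⟩ := mul_add_inj hy hy' he
    exact hR

end Coding

/-- A set that is definable with parameters. -/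
abbrev DefSet {N : Type*} [arith.Structure N] (S : Set N) : Prop :=
  Set.Definable₁ (Set.univ : Set N) arith S

theorem DefSet.empty {N : Type*} [arith.Structure N] : DefSet (∅ : Set N) :=
  Set.definable_empty

theorem DefSet.union {N : Type*} [arith.Structure N] {S T : Set N} (hS : DefSet S)
    (hT : DefSet T) : DefSet (S ∪ T) :=
  Set.Definable.union hS hT

theorem DefSet.inter {N : Type*} [arith.Structure N] {S T : Set N} (hS : DefSet S)
    (hT : DefSet T) : DefSet (S ∩ T) :=
  Set.Definable.inter hS hT

theorem DefSet.sdiff {N : Type*} [arith.Structure N] {S T : Set N} (hS : DefSet S)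
    (hT : DefSet T) : DefSet (S \ T) :=
  Set.Definable.sdiff hS hT

section InternalCardinality

/-- `R` restricts to a bijection between `{i | i < c}` and `T`. -/
structure BijRel (R : N → N → Prop) (c : N) (T : Set N) : Prop where
  total : ∀ i < c, ∃ y ∈ T, R i y
  surj : ∀ y ∈ T, ∃ i < c, R i y
  unique : ∀ i < c, ∀ y ∈ T, ∀ i' < c, ∀ y' ∈ T, R i y → R i' y' → (i = i' ↔ y = y')

theorem bijRel_iff {R : N → N → Prop} {c : N} {T : Set N} :
    BijRel R c T ↔ (∀ i < c, ∃ y ∈ T, R i y) ∧ (∀ y ∈ T, ∃ i < c, R i y) ∧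
      ∀ i < c, ∀ y ∈ T, ∀ i' < c, ∀ y' ∈ T, R i y → R i' y' → (i = i' ↔ y = y') :=
  ⟨fun h => ⟨h.1, h.2, h.3⟩, fun h => ⟨h.1, h.2.1, h.2.2⟩⟩

theorem InternalCard.exists_bijRel {T : Set N} {c : N} (h : InternalCard T c) :
    ∃ R, DefRel R ∧ BijRel R c T := by
  obtain ⟨f, hf, hbij⟩ := h
  refine ⟨fun i y => f i = y, hf, fun i hi => ⟨f i, hbij.mapsTo hi, rfl⟩,
    fun y hy => hbij.surjOn hy, ?_⟩
  rintro i hi _ - i' hi' _ - rfl rfl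
  exact ⟨congrArg f, fun h => hbij.injOn hi hi' h⟩

theorem InternalCard.defSet {T : Set N} {c : N} (h : InternalCard T c) : DefSet T := by
  obtain ⟨f, hf, hbij⟩ := h
  have hf : DefRel fun i y => f i = y := hf
  have h1 : DefPred fun v : Fin 1 → N => ∃ i, i < c ∧ f i = v 0 :=
    DefPred.ex (.and .of_arith (hf.comp (.var _) (.var _)))
  refine h1.congr fun v => ?_
  rw [← hbij.image_eq]
  rfl

theorem BijRel.internalCard {R : N → N → Prop} {T : Set N} {c : N} (h : BijRel R c T)
    (hR : DefRel R) (hT : DefSet T) : InternalCard T c := by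
  classical
  choose! f hfT hfR using h.total
  have hf {i y : N} (hi : i < c) : f i = y ↔ y ∈ T ∧ R i y := by
    constructor
    · rintro rfl
      exact ⟨hfT i hi, hfR i hi⟩
    · rintro ⟨hy, hiy⟩
      exact (h.unique i hi _ (hfT i hi) i hi y hy (hfR i hi) hiy).1 rfl
  refine ⟨fun i => if i < c then f i else 0, ?_, fun i hi => ?_, fun i hi i' hi' hii => ?_,
    fun y hy => ?_⟩
  · refine DefPred.congr (P := fun v : Fin 2 → N =>
      (v 0 < c ∧ v 1 ∈ T ∧ R (v 0) (v 1)) ∨ (¬ v 0 < c ∧ 0 = v 1)) .of_arith fun v => ?_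
    by_cases hv : v 0 < c
    · simp [hv, hf]
    · simp [hv]
  · have hi : i < c := hi
    simpa [hi] using hfT i hi
  · have hi : i < c := hi
    have hi' : i' < c := hi'
    simp only [hi, hi', if_true] at hii
    exact (h.unique i hi _ (hfT i hi) i' hi' _ (hfT i' hi') (hfR i hi) (hfR i' hi')).2 hii
  · obtain ⟨i, hi, hiy⟩ := h.surj y hy
    refine ⟨i, hi, ?_⟩
    simpa [hi] using (hf hi).2 ⟨hy, hiy⟩

theorem exists_codedRel_bijRel {S : Set N} (hS : DefSet S) {B x : N} (hx : x < B) :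
    ∃ c, c ≤ x ∧ ∃ a b, BijRel (CodedRel a b B) c {y | y ∈ S ∧ y < x} := by
  induction x using induction_of_definable with
  | hP =>
    simp only [bijRel_iff, Set.mem_ofPred_eq]
    exact DefPred.of_arith
  | zero => exact ⟨0, le_rfl, 0, 0, by constructor <;> simp⟩
  | succ x ih =>
    have hxB : x < B := (lt_succ_iff.2 le_rfl).trans hx
    obtain ⟨c, hc, a, b, h⟩ := ih hxB
    by_cases hxS : x ∈ S
    · obtain ⟨a', b', h'⟩ := exists_codedRel (R := fun i y =>
        (i < c ∧ y < x ∧ CodedRel a b B i y) ∨ (i = c ∧ y = x)) .of_arith B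
      refine ⟨c + 1, by gcongr, a', b', ?_⟩
      have h' : ∀ i ≤ c, ∀ y ≤ x, CodedRel a' b' B i y ↔
          (i < c ∧ y < x ∧ CodedRel a b B i y) ∨ (i = c ∧ y = x) := fun i hi y hy =>
        h' i ((hi.trans hc).trans_lt hxB) y (hy.trans_lt hxB)
      constructor
      · intro i hi
        have hi := lt_succ_iff.1 hi
        rcases hi.lt_or_eq with hlt | rfl
        · obtain ⟨y, ⟨hyS, hyx⟩, hiy⟩ := h.total i hlt
          exact ⟨y, ⟨hyS, lt_succ_iff.2 hyx.le⟩, (h' i hi y hyx.le).2 (Or.inl ⟨hlt, hyx, hiy⟩)⟩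
        · exact ⟨x, ⟨hxS, lt_succ_iff.2 le_rfl⟩, (h' i hi x le_rfl).2 (Or.inr ⟨rfl, rfl⟩)⟩
      · rintro y ⟨hyS, hy⟩
        have hy := lt_succ_iff.1 hy
        rcases hy.lt_or_eq with hlt | rfl
        · obtain ⟨i, hi, hiy⟩ := h.surj y ⟨hyS, hlt⟩
          exact ⟨i, lt_succ_iff.2 hi.le, (h' i hi.le y hy).2 (Or.inl ⟨hi, hlt, hiy⟩)⟩
        · exact ⟨c, lt_succ_iff.2 le_rfl, (h' c le_rfl y hy).2 (Or.inr ⟨rfl, rfl⟩)⟩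
      · rintro i hi y ⟨hyS, hy⟩ i' hi' y' ⟨hyS', hy'⟩ hiy hiy'
        rw [h' i (lt_succ_iff.1 hi) y (lt_succ_iff.1 hy)] at hiy
        rw [h' i' (lt_succ_iff.1 hi') y' (lt_succ_iff.1 hy')] at hiy'
        rcases hiy with ⟨h1, h2, h3⟩ | ⟨rfl, rfl⟩ <;> rcases hiy' with ⟨h4, h5, h6⟩ | ⟨rfl, rfl⟩
        · exact h.unique i h1 y ⟨hyS, h2⟩ i' h4 y' ⟨hyS', h5⟩ h3 h6
        · exact iff_of_false h1.ne h2.ne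
        · exact iff_of_false h4.ne' h5.ne'
        · exact iff_of_true rfl rfl
    · refine ⟨c, hc.trans (lt_succ_iff.2 le_rfl).le, a, b, ?_⟩
      convert h using 1
      ext y
      refine and_congr_right fun hyS => lt_succ_iff.trans ⟨fun hy => hy.lt_of_ne ?_, le_of_lt⟩
      rintro rfl
      exact hxS hyS

theorem exists_internalCard {S : Set N} (hS : DefSet S) {D : N} (hD : ∀ y ∈ S, y < D) :
    ∃ c, InternalCard S c := by
  obtain ⟨c, -, a, b, h⟩ := exists_codedRel_bijRel hS (lt_succ_iff.2 (le_refl D))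
  rw [show {y | y ∈ S ∧ y < D} = S from Set.ext fun y => and_iff_left_of_imp (hD y)] at h
  exact ⟨c, h.internalCard .of_arith hS⟩

theorem codedRel_pigeonhole {B x : N} (hx : x < B) (a b : N)
    (total : ∀ i ≤ x, ∃ y < x, CodedRel a b B i y) :
    ∃ i ≤ x, ∃ i' ≤ x, ∃ y < x, CodedRel a b B i y ∧ CodedRel a b B i' y ∧ i ≠ i' := by
  induction x using induction_of_definable generalizing a b with
  | hP => exact DefPred.of_arith
  | zero =>
    obtain ⟨y, hy, -⟩ := total 0 le_rfl
    exact absurd hy not_lt_zero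
  | succ x ih =>
    by_contra! inj
    obtain ⟨y₀, hy₀, h₀⟩ := total (x + 1) le_rfl
    have hxB : x < B := (lt_succ_iff.2 le_rfl).trans hx
    obtain ⟨a', b', h'⟩ := exists_codedRel (R := fun i y =>
      CodedRel a b B i y ∨ (CodedRel a b B i x ∧ y = y₀)) .of_arith B
    have h' : ∀ i ≤ x, ∀ y ≤ x, CodedRel a' b' B i y ↔
        CodedRel a b B i y ∨ (CodedRel a b B i x ∧ y = y₀) := fun i hi y hy =>
      h' i (hi.trans_lt hxB) y (hy.trans_lt hxB)
    have hsucc {z : N} (hz : z ≤ x) : z ≤ x + 1 := hz.trans (lt_succ_iff.2 le_rfl).le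
    have hlast {i : N} (hi : i ≤ x) : ¬ CodedRel a b B i y₀ := fun h =>
      (lt_succ_iff.2 hi).ne (inj i (hsucc hi) (x + 1) le_rfl y₀ hy₀ h h₀)
    obtain ⟨i, hi, i', hi', y, hy, h1, h2, hne⟩ := ih hxB a' b' fun i hi => by
      obtain ⟨y, hy, hiy⟩ := total i (hsucc hi)
      rcases (lt_succ_iff.1 hy).lt_or_eq with hlt | rfl
      · exact ⟨y, hlt, (h' i hi y hlt.le).2 (Or.inl hiy)⟩
      · have hlt : y₀ < y := (lt_succ_iff.1 hy₀).lt_of_ne fun h => hlast hi (h ▸ hiy)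
        exact ⟨y₀, hlt, (h' i hi y₀ hlt.le).2 (Or.inr ⟨hiy, rfl⟩)⟩
    rw [h' i hi y hy.le] at h1
    rw [h' i' hi' y hy.le] at h2
    have hinj {z : N} (hz : z < x + 1) (h1 : CodedRel a b B i z) (h2 : CodedRel a b B i' z) :
        False :=
      hne (inj i (hsucc hi) i' (hsucc hi') z hz h1 h2)
    rcases h1 with h1 | ⟨h1, rfl⟩ <;> rcases h2 with h2 | ⟨h2, h3⟩
    · exact hinj (lt_succ_iff.2 hy.le) h1 h2
    · exact hlast hi (h3 ▸ h1)
    · exact hlast hi' h2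
    · exact hinj (lt_succ_iff.2 le_rfl) h1 h2

theorem le_of_injective_defRel {R : N → N → Prop} (hR : DefRel R) {c c' : N}
    (total : ∀ i < c, ∃ y < c', R i y)
    (inj : ∀ i < c, ∀ i' < c, ∀ y < c', R i y → R i' y → i = i') : c ≤ c' := by
  by_contra! hlt
  have hB : c' < c' + 1 := lt_succ_iff.2 le_rfl
  obtain ⟨a, b, h⟩ := exists_codedRel hR (c' + 1)
  obtain ⟨i, hi, i', hi', y, hy, h1, h2, hne⟩ := codedRel_pigeonhole hB a b fun i hi => by
    obtain ⟨y, hy, hiy⟩ := total i (hi.trans_lt hlt)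
    exact ⟨y, hy, (h i (hi.trans_lt hB) y (hy.trans hB)).2 hiy⟩
  rw [h i (hi.trans_lt hB) y (hy.trans hB)] at h1
  rw [h i' (hi'.trans_lt hB) y (hy.trans hB)] at h2
  exact hne (inj i (hi.trans_lt hlt) i' (hi'.trans_lt hlt) y hy h1 h2)

theorem InternalCard.le_of_subset {S T : Set N} {c c' : N} (hS : InternalCard S c)
    (hT : InternalCard T c') (hST : S ⊆ T) : c ≤ c' := by
  have hSd := hS.defSet
  obtain ⟨R, hR, h⟩ := hS.exists_bijRel
  obtain ⟨R', hR', h'⟩ := hT.exists_bijRel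
  refine le_of_injective_defRel (R := fun i j => ∃ y, y ∈ S ∧ R i y ∧ R' j y) .of_arith
    (fun i hi => ?_) ?_
  · obtain ⟨y, hy, hiy⟩ := h.total i hi
    obtain ⟨j, hj, hjy⟩ := h'.surj y (hST hy)
    exact ⟨j, hj, y, hy, hiy, hjy⟩
  · rintro i hi i' hi' j hj ⟨y, hy, hiy, hjy⟩ ⟨y', hy', hiy', hjy'⟩
    exact (h.unique i hi y hy i' hi' y' hy' hiy hiy').2
      ((h'.unique j hj y (hST hy) j hj y' (hST hy') hjy hjy').1 rfl)

theorem internalCard_lt (D : N) : InternalCard {x : N | x < D} D :=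
  BijRel.internalCard (R := fun i y => i = y)
    ⟨fun i hi => ⟨i, hi, rfl⟩, fun i hi => ⟨i, hi, rfl⟩, by rintro i - _ - i' - _ - rfl rfl; rfl⟩
    .of_arith (DefPred.of_arith (P := fun v : Fin 1 → N => v 0 < D))

theorem internalCard_empty : InternalCard (∅ : Set N) 0 := by
  simpa using internalCard_lt (0 : N)

theorem InternalCard.union {S T : Set N} {c c' : N} (hS : InternalCard S c)
    (hT : InternalCard T c') (hST : Disjoint S T) : InternalCard (S ∪ T) (c + c') := by
  have hSd := hS.defSet
  have hTd := hT.defSet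
  obtain ⟨R, hR, h⟩ := hS.exists_bijRel
  obtain ⟨R', hR', h'⟩ := hT.exists_bijRel
  rw [Set.disjoint_left] at hST
  refine BijRel.internalCard (R := fun i y => (i < c ∧ y ∈ S ∧ R i y) ∨
    ∃ j, j < c' ∧ i = c + j ∧ y ∈ T ∧ R' j y) ⟨fun i hi => ?_, fun y hy => ?_, ?_⟩ .of_arith
    (DefSet.union hSd hTd)
  · rcases lt_or_ge i c with hic | hic
    · obtain ⟨y, hy, hiy⟩ := h.total i hic
      exact ⟨y, Or.inl hy, Or.inl ⟨hic, hy, hiy⟩⟩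
    · obtain ⟨j, rfl⟩ := exists_add_of_le hic
      have hj : j < c' := lt_of_add_lt_add_left hi
      obtain ⟨y, hy, hjy⟩ := h'.total j hj
      exact ⟨y, Or.inr hy, Or.inr ⟨j, hj, rfl, hy, hjy⟩⟩
  · rcases hy with hy | hy
    · obtain ⟨i, hi, hiy⟩ := h.surj y hy
      exact ⟨i, hi.trans_le le_self_add, Or.inl ⟨hi, hy, hiy⟩⟩
    · obtain ⟨j, hj, hjy⟩ := h'.surj y hy
      exact ⟨c + j, by gcongr, Or.inr ⟨j, hj, rfl, hy, hjy⟩⟩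
  · rintro i - y - i' - y' - (⟨hi, hy, hiy⟩ | ⟨j, hj, rfl, hy, hjy⟩)
      (⟨hi', hy', hiy'⟩ | ⟨j', hj', rfl, hy', hjy'⟩)
    · exact h.unique i hi y hy i' hi' y' hy' hiy hiy'
    · refine iff_of_false (fun h => ?_) fun h => hST hy (h ▸ hy')
      exact absurd hi (by simp [h])
    · refine iff_of_false (fun h => ?_) fun h => hST hy' (h ▸ hy)
      exact absurd hi' (by simp [← h])
    · rw [add_right_inj]
      exact h'.unique j hj y hy j' hj' y' hy' hjy hjy'

theorem InternalCard.le_add {S T U : Set N} {c c' e D : N} (hS : InternalCard S c)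
    (hT : InternalCard T c') (hU : InternalCard U e) (hD : ∀ y ∈ U, y < D) (h : S ⊆ T ∪ U) :
    c ≤ c' + e := by
  obtain ⟨e', he'⟩ := exists_internalCard (DefSet.sdiff hU.defSet hT.defSet)
    fun y hy => hD y hy.1
  have h1 := hS.le_of_subset (hT.union he' Set.disjoint_sdiff_right) (by rwa [Set.union_sdiff_self])
  exact h1.trans (by gcongr; exact he'.le_of_subset hU Set.sdiff_subset)

end InternalCardinality

section LargeIntersections

variable {ι : Type*} {S : ι → Set N} {D : N}

theorem defSet_biUnion {N : Type*} [arith.Structure N] {S : ι → Set N} {s : Finset ι}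
    (hS : ∀ i ∈ s, DefSet (S i)) :
    DefSet {y | ∃ i ∈ s, y ∈ S i} := by
  classical
  induction s using Finset.induction_on with
  | empty => simpa using DefSet.empty (N := N)
  | insert k s hk ih =>
    simp only [Finset.mem_insert, forall_eq_or_imp, exists_eq_or_imp] at hS ⊢
    exact DefSet.union hS.1 (ih hS.2)

theorem exists_card_inter_biUnion {T : Set N} (hT : DefSet T) {s : Finset ι} {w : N}
    (hS : ∀ i ∈ s, DefSet (S i)) (hD : ∀ i ∈ s, ∀ y ∈ S i, y < D)
    (hw : ∀ i ∈ s, ∀ t, InternalCard (T ∩ S i) t → w * t ≤ D) :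
    ∃ τ, InternalCard (T ∩ {y | ∃ i ∈ s, y ∈ S i}) τ ∧ w * τ ≤ s.card * D := by
  classical
  induction s using Finset.induction_on with
  | empty =>
    exact ⟨0, by simpa using internalCard_empty (N := N), by simp⟩
  | insert k s hk ih =>
    have hdef := defSet_biUnion hS
    rw [Finset.forall_mem_insert] at hS hD hw
    obtain ⟨τ, hτ, hτw⟩ := ih hS.2 hD.2 hw.2
    obtain ⟨t, ht⟩ := exists_internalCard (DefSet.inter hT hS.1) fun y hy => hD.1 y hy.2
    have hbound : ∀ y ∈ T ∩ {y | ∃ i ∈ insert k s, y ∈ S i}, y < D := by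
      rintro y ⟨-, i, hi, hy⟩
      rcases Finset.mem_insert.1 hi with rfl | hi
      · exact hD.1 y hy
      · exact hD.2 i hi y hy
    obtain ⟨e, he⟩ := exists_internalCard (DefSet.inter hT hdef) hbound
    refine ⟨e, he, ?_⟩
    have hle : e ≤ τ + t := he.le_add hτ ht (fun y hy => hD.1 y hy.2) (by
      rintro y ⟨hyT, i, hi, hy⟩
      rcases Finset.mem_insert.1 hi with rfl | hi
      · exact Or.inr ⟨hyT, hy⟩
      · exact Or.inl ⟨hyT, i, hi, hy⟩)
    rw [Finset.card_insert_of_notMem hk]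
    calc w * e ≤ w * (τ + t) := by gcongr
      _ = w * τ + w * t := by ring
      _ ≤ s.card * D + D := add_le_add hτw (hw.1 t ht)
      _ = ((s.card + 1 : ℕ) : N) * D := by push_cast; ring

theorem exists_card_biUnion {s : Finset ι} {c : ι → N} {v w : N}
    (hS : ∀ i ∈ s, InternalCard (S i) (c i)) (hD : ∀ i ∈ s, ∀ y ∈ S i, y < D)
    (hv : ∀ i ∈ s, D ≤ v * c i)
    (hw : ∀ i ∈ s, ∀ j ∈ s, i ≠ j → ∀ t, InternalCard (S i ∩ S j) t → w * t ≤ D) :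
    ∃ e, InternalCard {y | ∃ i ∈ s, y ∈ S i} e ∧
      s.card * (w * D) ≤ v * w * e + v * (s.card * s.card * D) := by
  classical
  induction s using Finset.induction_on with
  | empty =>
    exact ⟨0, by simpa using internalCard_empty (N := N), by simp⟩
  | insert k s hk ih =>
    simp only [Finset.forall_mem_insert] at hS hD hv hw
    obtain ⟨e, he, hle⟩ := ih hS.2 hD.2 hv.2 fun i hi j hj => (hw.2 i hi).2 j hj
    obtain ⟨τ, hτ, hτw⟩ := exists_card_inter_biUnion hS.1.defSet
      (fun i hi => (hS.2 i hi).defSet) hD.2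
      (fun i hi t ht => hw.1.2 i hi (by rintro rfl; exact hk hi) t ht)
    obtain ⟨f, hf⟩ := exists_internalCard (DefSet.sdiff hS.1.defSet he.defSet)
      fun y hy => hD.1 y hy.1
    refine ⟨e + f, ?_, ?_⟩
    · convert he.union hf Set.disjoint_sdiff_right using 1
      rw [Set.union_sdiff_self]
      ext y
      simp [or_comm]
    · have hc : c k ≤ f + τ := hS.1.le_add hf hτ (fun y hy => hD.1 y hy.1)
        (Set.sdiff_union_inter _ _).ge
      have h1 : w * D ≤ v * w * f + v * (s.card * D) := by
        calc w * D ≤ w * (v * c k) := by gcongr; exact hv.1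
          _ ≤ w * (v * (f + τ)) := by gcongr
          _ = v * w * f + v * (w * τ) := by ring
          _ ≤ v * w * f + v * (s.card * D) := by gcongr
      rw [Finset.card_insert_of_notMem hk]
      push_cast
      calc ((s.card : N) + 1) * (w * D) = s.card * (w * D) + w * D := by ring
        _ ≤ v * w * e + v * (s.card * s.card * D) + (v * w * f + v * (s.card * D)) := by gcongr
        _ ≤ v * w * e + v * (s.card * s.card * D) + (v * w * f + v * (s.card * D)) +
            v * ((s.card + 1) * D) := le_self_add
        _ = v * w * (e + f) + v * ((s.card + 1) * (s.card + 1) * D) := by ring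

theorem exists_large_inter {s : Finset ι} {c : ι → N} {v : ℕ} (hv0 : 0 < v) (hD0 : 0 < D)
    (hcard : s.card = 2 * v) (hS : ∀ i ∈ s, InternalCard (S i) (c i))
    (hD : ∀ i ∈ s, ∀ y ∈ S i, y < D) (hv : ∀ i ∈ s, D ≤ v * c i) :
    ∃ i ∈ s, ∃ j ∈ s, i ≠ j ∧ ∃ t, InternalCard (S i ∩ S j) t ∧
      D < ((4 * v ^ 2 + 1 : ℕ) : N) * t := by
  by_contra! hw
  obtain ⟨e, he, hle⟩ := exists_card_biUnion hS hD hv hw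
  have heD : e ≤ D := he.le_of_subset (internalCard_lt D) fun y ⟨i, hi, hy⟩ => hD i hi y hy
  rw [hcard] at hle
  have hvN : (0 : N) < v := by exact_mod_cast hv0
  have h1 : (v : N) * (4 * v ^ 2 + 1) * D + v * (4 * v ^ 2 + 1) * D ≤
      v * (4 * v ^ 2 + 1) * D + v * (4 * v ^ 2) * D := by
    calc (v : N) * (4 * v ^ 2 + 1) * D + v * (4 * v ^ 2 + 1) * D
        = ((2 * v : ℕ) : N) * (((4 * v ^ 2 + 1 : ℕ) : N) * D) := by push_cast; ring
      _ ≤ _ := hle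
      _ ≤ v * ((4 * v ^ 2 + 1 : ℕ) : N) * D + v * (((2 * v : ℕ) : N) * ((2 * v : ℕ) : N) * D) := by
        gcongr
      _ = v * (4 * v ^ 2 + 1) * D + v * (4 * v ^ 2) * D := by push_cast; ring
  refine (le_of_add_le_add_left h1).not_gt ?_
  gcongr
  exact lt_succ_iff.2 le_rfl

end LargeIntersections

section Conditions

theorem tupleCode_eq_sum (d : N) {n : ℕ} (b : (Fin n → Bool) → N) :
    tupleCode d b = ∑ j : Fin (2 ^ n), b (binOfFin j) * d ^ (j : ℕ) := by
  rw [Fin.sum_univ_def, tupleCode]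
  induction List.finRange (2 ^ n) with
  | nil => rfl
  | cons j l ih =>
    rw [List.foldr_cons, ih, List.map_cons, List.sum_cons]
    rfl

theorem sum_digits_lt {d : N} {k : ℕ} {f : Fin k → N} (hf : ∀ j, f j < d) :
    ∑ j, f j * d ^ (j : ℕ) < d ^ k := by
  induction k with
  | zero => simp
  | succ k ih =>
    rw [Fin.sum_univ_castSucc]
    have h := ih fun j => hf j.castSucc
    calc _ < d ^ k + f (Fin.last k) * d ^ k := by simpa using h
      _ = (f (Fin.last k) + 1) * d ^ k := by ring
      _ ≤ d * d ^ k := by gcongr; exact succ_le_iff.2 (hf _)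
      _ = d ^ (k + 1) := by ring

theorem sum_digits_injective {d : N} {k : ℕ} {f g : Fin k → N} (hf : ∀ j, f j < d)
    (hg : ∀ j, g j < d) (h : ∑ j, f j * d ^ (j : ℕ) = ∑ j, g j * d ^ (j : ℕ)) : f = g := by
  induction k with
  | zero => exact Subsingleton.elim _ _
  | succ k ih =>
    rw [Fin.sum_univ_castSucc, Fin.sum_univ_castSucc, add_comm, add_comm (∑ _, _)] at h
    obtain ⟨hlast, hinit⟩ := mul_add_inj (sum_digits_lt fun j => hf j.castSucc)
      (sum_digits_lt fun j => hg j.castSucc) h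
    have h' := ih (fun j => hf _) (fun j => hg _) hinit
    funext j
    induction j using Fin.lastCases with
    | last => exact hlast
    | cast j => exact congrFun h' j

theorem binOfFin_surjective (n : ℕ) : Function.Surjective (binOfFin (n := n)) := by
  refine ((Fintype.bijective_iff_injective_and_card _).2 ⟨fun i j h => ?_, by simp⟩).2
  refine Fin.ext (Nat.eq_of_testBit_eq fun k => ?_)
  by_cases hk : k < n
  · exact congrFun h ⟨k, hk⟩
  · have hlt {m : ℕ} (hm : m < 2 ^ n) : m < 2 ^ k :=
      hm.trans_le (Nat.pow_le_pow_right two_pos (not_lt.1 hk))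
    rw [Nat.testBit_lt_two_pow (hlt i.2), Nat.testBit_lt_two_pow (hlt j.2)]

theorem tupleCode_lt {d : N} {n : ℕ} {b : (Fin n → Bool) → N} (hb : ∀ σ, b σ < d) :
    tupleCode d b < d ^ 2 ^ n := by
  rw [tupleCode_eq_sum]
  exact sum_digits_lt fun j => hb _

theorem tupleCode_injective {d : N} {n : ℕ} {b b' : (Fin n → Bool) → N} (hb : ∀ σ, b σ < d)
    (hb' : ∀ σ, b' σ < d) (h : tupleCode d b = tupleCode d b') : b = b' := by
  rw [tupleCode_eq_sum, tupleCode_eq_sum] at h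
  have h' := sum_digits_injective (fun j => hb _) (fun j => hb' _) h
  funext σ
  obtain ⟨j, rfl⟩ := binOfFin_surjective n σ
  exact congrFun h' j

theorem reduct_rfl {N : Type*} [arith.Structure N] {n : ℕ} (h : n ≤ n) (φ : CFormula N n) :
    reduct h φ = φ := by
  rw [reduct, Formula.relabel]
  exact (BoundedFormula.relabel_sumInl φ).trans (BoundedFormula.castLE_rfl _ φ)

theorem exists_lower_bound {d : N} {p q : Condition N d} (hn : p.n = q.n) {t : N} {w : ℕ}
    (ht : InternalCard (realizationCodes d p.fmls ∩ realizationCodes d q.fmls) t)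
    (hw : d ^ 2 ^ p.n < w * t) : ∃ r : Condition N d, CondLE r p ∧ CondLE r q := by
  cases p with | mk n P hPfin _ hPb _
  cases q with | mk m Q hQfin _ hQb _
  obtain rfl : n = m := hn
  have hcodes : realizationCodes d (P ∪ Q) = realizationCodes d P ∩ realizationCodes d Q := by
    ext e
    constructor
    · rintro ⟨b, hb, rfl⟩
      exact ⟨⟨b, fun φ hφ => hb φ (Or.inl hφ), rfl⟩, ⟨b, fun φ hφ => hb φ (Or.inr hφ), rfl⟩⟩
    · rintro ⟨⟨b, hb, rfl⟩, ⟨b', hb', h⟩⟩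
      obtain rfl := tupleCode_injective (hPb b hb) (hQb b' hb') h
      exact ⟨b, fun φ hφ => hφ.elim (hb φ) (hb' φ), rfl⟩
  rw [← hcodes] at ht
  have hpos : 0 < w * t := zero_le.trans_lt hw
  have hw0 : 0 < w := by
    rw [Nat.pos_iff_ne_zero]
    rintro rfl
    simp at hpos
  have ht0 : 0 < t := by
    rw [pos_iff_ne_zero]
    rintro rfl
    simp at hpos
  have hreal : ∃ b, RealizesAll (P ∪ Q) b := by
    obtain ⟨f, -, hf⟩ := ht
    obtain ⟨b, hb, -⟩ := hf.mapsTo ht0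
    exact ⟨b, hb⟩
  refine ⟨⟨n, P ∪ Q, hPfin.union hQfin, hreal,
    fun b hb => hPb b fun φ hφ => hb φ (Or.inl hφ), 1, w, t, one_pos, hw0, ht, ?_⟩,
    ⟨le_rfl, fun ψ hψ => ?_⟩, ⟨le_rfl, fun ψ hψ => ?_⟩⟩
  · change ((1 : ℕ) : N) * d ^ 2 ^ n < w * t
    simpa using hw
  · rw [reduct_rfl] at hψ
    exact Or.inl hψ
  · rw [reduct_rfl] at hψ
    exact Or.inr hψ

theorem exists_compatible_of_infinite {d : N} {A : Set (Condition N d)} (hA : A.Infinite)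
    {n v : ℕ} (hv : 0 < v) (c : Condition N d → N) (hn : ∀ p ∈ A, p.n = n)
    (hc : ∀ p ∈ A, InternalCard (realizationCodes d p.fmls) (c p))
    (hlarge : ∀ p ∈ A, d ^ 2 ^ n ≤ v * c p) :
    ∃ p ∈ A, ∃ q ∈ A, p ≠ q ∧ ∃ r : Condition N d, CondLE r p ∧ CondLE r q := by
  obtain ⟨s, hsA, hs⟩ := hA.exists_subset_card_eq (2 * v)
  have hbound : ∀ p ∈ s, ∀ y ∈ realizationCodes d p.fmls, y < d ^ 2 ^ n := by
    rintro p hp _ ⟨b, hb, rfl⟩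
    rw [← hn p (hsA hp)]
    exact tupleCode_lt (p.bounded b hb)
  have hpos : 0 < d ^ 2 ^ n := by
    obtain ⟨p, hp⟩ : s.Nonempty := Finset.card_pos.1 (by omega)
    obtain ⟨b, hb⟩ := p.realizable
    exact zero_le.trans_lt (hbound p hp _ ⟨b, hb, rfl⟩)
  obtain ⟨p, hp, q, hq, hpq, t, ht, htw⟩ := exists_large_inter hv hpos hs
    (fun p hp => hc p (hsA hp)) hbound fun p hp => hlarge p (hsA hp)
  have hpn := hn p (hsA hp)
  rw [← hpn] at htw
  exact ⟨p, hsA hp, q, hsA hq, hpq,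
    exists_lower_bound (hpn.trans (hn q (hsA hq)).symm) ht htw⟩

end Conditions

end Arith

open Arith in
/-- The poset `P` of conditions satisfies the countable chain condition, even when the
underlying model `N` of `PA` is uncountable: every set of pairwise incompatible
conditions is countable. -/
theorem statement_11 (N : Type*) [arith.Structure N] (hN : NonstandardModel N)
    (a d : N) (ha : ¬ IsStd a) (hd : IsPow2 a d)
    (A : Set (Condition N d))
    (hA : ∀ p ∈ A, ∀ q ∈ A, p ≠ q → ¬ ∃ r : Condition N d, CondLE r p ∧ CondLE r q) :
    A.Countable := by
  have : Fact (IsPAModel N) := ⟨hN.1⟩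
  choose u v c hu hv hc hlarge using fun p : Condition N d => p.large
  have hcover : A = ⋃ k : ℕ × ℕ, {p ∈ A | p.n = k.1 ∧ v p = k.2} := by
    ext p
    simp
  rw [hcover]
  refine Set.countable_iUnion fun k => Set.Finite.countable ?_
  by_contra hinf
  obtain ⟨p₀, -, -, hp₀⟩ := Set.Infinite.nonempty hinf
  obtain ⟨p, hp, q, hq, hpq, hr⟩ := exists_compatible_of_infinite hinf (n := k.1) (v := k.2)
    (hp₀ ▸ hv p₀) c (fun p hp => hp.2.1) (fun p _ => hc p) fun p hp => by
      rw [← hp.2.1, ← hp.2.2]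
      refine le_trans ?_ (le_of_lt (hlarge p))
      change _ ≤ (u p : N) * d ^ 2 ^ p.n
      exact le_mul_of_one_le_left zero_le (by exact_mod_cast hu p)
  exact hA p hp.1 q hq.1 hpq hr
end

section
/- (ZFC + MA) Suppose M is a countable non-standard model of PA, A ⊆ 2^ω has cardinality < 2^ω, and B ⊆ 2^ω is countable and such that the Turing ideal generated by SSy(M) ∪ B is disjoint from A. Then there exists a family (M_X : X ⊆ 2^ω) of models such that each M_X is an elementary extension of M, B ⊆ SSy(M_X), |M_X| = |SSy(M_X)| = max{ω, |X|}, and for all X, Y ⊆ 2^ω: X ⊆ Y ⟺ M_X ≼ M_Y ⟺ SSy(M_X) ⊆ SSy(M_Y). -/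
open FirstOrder FirstOrder.Language

namespace Arith

/-- Relativized partial recursiveness: `RecursiveIn O f` means the partial function `f`
is partial recursive in the total oracle `O`.  This mirrors `Nat.Partrec`, with an extra
constructor for the oracle. -/
inductive RecursiveIn (O : ℕ → ℕ) : (ℕ →. ℕ) → Prop
  | zero : RecursiveIn O (pure 0)
  | succ : RecursiveIn O Nat.succ
  | left : RecursiveIn O ↑fun n : ℕ => n.unpair.1
  | right : RecursiveIn O ↑fun n : ℕ => n.unpair.2
  | oracle : RecursiveIn O O
  | pair {f g} : RecursiveIn O f → RecursiveIn O g →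
      RecursiveIn O fun n => Nat.pair <$> f n <*> g n
  | comp {f g} : RecursiveIn O f → RecursiveIn O g → RecursiveIn O fun n => g n >>= f
  | prec {f g} : RecursiveIn O f → RecursiveIn O g → RecursiveIn O (Nat.unpaired fun a n =>
      n.rec (f a) fun y IH => do let i ← IH; g (Nat.pair a (Nat.pair y i)))
  | rfind {f} : RecursiveIn O f →
      RecursiveIn O fun a => Nat.rfind fun n => (fun m => m = 0) <$> f (Nat.pair a n)

open Classical in
/-- The characteristic function of a set of natural numbers. -/
noncomputable def charFn (X : Set ℕ) : ℕ → ℕ := fun n => if n ∈ X then 1 else 0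

/-- Turing reducibility between sets of natural numbers. -/
def TuringLE (Y X : Set ℕ) : Prop := RecursiveIn (charFn X) (charFn Y)

/-- The Turing join `X ⊕ Y = 2X ∪ (2Y + 1)`. -/
def turingJoin (X Y : Set ℕ) : Set ℕ :=
  {n | ∃ m ∈ X, n = 2 * m} ∪ {n | ∃ m ∈ Y, n = 2 * m + 1}

/-- A Turing ideal: a collection of subsets of `ℕ` closed under Turing join and Turing
reducibility. -/
def TuringIdeal (S : Set (Set ℕ)) : Prop :=
  (∀ X ∈ S, ∀ Y ∈ S, turingJoin X Y ∈ S) ∧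
  (∀ X ∈ S, ∀ Y : Set ℕ, TuringLE Y X → Y ∈ S)

/-- The Turing ideal generated by a collection of subsets of `ℕ`. -/
def tIdealGen (C : Set (Set ℕ)) : Set (Set ℕ) :=
  ⋂₀ {I | TuringIdeal I ∧ C ⊆ I}

/-- `T ⊆ ℕ` codes a binary tree: the set of finite binary sequences whose codes lie in
`T` is closed under initial segments. -/
def IsBinTreeSet (T : Set ℕ) : Prop :=
  ∀ s : List Bool, Encodable.encode s ∈ T → ∀ t : List Bool, t <+: s → Encodable.encode t ∈ T

/-- The tree coded by `T` is infinite. -/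
def TreeInf (T : Set ℕ) : Prop := {s : List Bool | Encodable.encode s ∈ T}.Infinite

/-- `P ⊆ ℕ`, viewed as an infinite branch via its characteristic function, is a path
through the tree coded by `T`. -/
def PathThrough (P T : Set ℕ) : Prop :=
  ∀ f : ℕ → Bool, (∀ i : ℕ, f i = true ↔ i ∈ P) →
    ∀ m : ℕ, Encodable.encode (List.ofFn fun i : Fin m => f i) ∈ T

/-- A Scott set: a nonempty Turing ideal such that every infinite binary tree in it has
an infinite path in it. -/
def ScottSet (S : Set (Set ℕ)) : Prop :=
  S.Nonempty ∧ TuringIdeal S ∧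
  ∀ T ∈ S, IsBinTreeSet T → TreeInf T → ∃ P ∈ S, PathThrough P T

open Classical in
/-- The characteristic function of a set, with values in `Bool`. -/
noncomputable def chi (X : Set ℕ) : ℕ → Bool := fun n => if n ∈ X then true else false

/-- The iterated Turing join `⊕_{i<k} X i`. -/
def joinMany : {k : ℕ} → (Fin k → Set ℕ) → Set ℕ
  | 0, _ => ∅
  | (k + 1), X => turingJoin (joinMany fun i => X i.castSucc) (X (Fin.last k))

end Arith

namespace Arith

/-- `D` is dense (below) in the order `le`. -/
def DenseBelow {P : Type} (le : P → P → Prop) (D : Set P) : Prop :=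
  ∀ p : P, ∃ q ∈ D, le q p

/-- Two elements are compatible if they have a common lower bound. -/
def OrdCompatible {P : Type} (le : P → P → Prop) (p q : P) : Prop :=
  ∃ r, le r p ∧ le r q

/-- The countable chain condition: every antichain (set of pairwise incompatible
elements) is countable. -/
def CCC {P : Type} (le : P → P → Prop) : Prop :=
  ∀ A : Set P, (∀ p ∈ A, ∀ q ∈ A, p ≠ q → ¬ OrdCompatible le p q) → A.Countable

/-- A filter on a preorder: a nonempty, upward closed, downward directed set. -/
def IsFilterOn {P : Type} (le : P → P → Prop) (F : Set P) : Prop :=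
  F.Nonempty ∧ (∀ p ∈ F, ∀ q : P, le p q → q ∈ F) ∧
    (∀ p ∈ F, ∀ q ∈ F, ∃ r ∈ F, le r p ∧ le r q)

/-- Martin's Axiom: for every nonempty ccc preorder `P` and every family of fewer than
continuum many dense subsets of `P`, there is a filter on `P` meeting every set in the
family. -/
def MartinsAxiom : Prop :=
  ∀ (P : Type) (le : P → P → Prop), Nonempty P → Reflexive le → Transitive le → CCC le →
    ∀ D : Set (Set P), Cardinal.mk D < 2 ^ Cardinal.aleph0 →
      (∀ d ∈ D, DenseBelow le d) →
      ∃ F : Set P, IsFilterOn le F ∧ ∀ d ∈ D, (F ∩ d).Nonempty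

end Arith

namespace Arith

section Combinatorics

open Finset Function

/-- Cauchy–Schwarz for duplicating one coordinate: if membership in `A` does not depend on the
coordinate `b`, then the set of points that stay in `A` when the coordinates `a` and `b` are
interchanged has at least the squared density of `A`. -/
theorem sq_card_le_card_swap {κ F : Type} [Fintype κ] [DecidableEq κ] [Fintype F] [DecidableEq F]
    [Nonempty F] (A : Finset (κ → F)) {a b : κ} (hab : a ≠ b)
    (hA : ∀ w u, update w b u ∈ A ↔ w ∈ A) :
    #A ^ 2 ≤ Fintype.card (κ → F) * #{v : κ → F | v ∈ A ∧ v ∘ Equiv.swap a b ∈ A} := by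
  set q := Fintype.card F with hq
  have hq0 : 0 < q := Fintype.card_pos
  set n : (κ → F) → ℕ := fun w => #{u : F | update w a u ∈ A} with hn
  have h1 : ∑ w, n w = q * #A := by
    have : ∑ w, n w = #(({p : (κ → F) × F | update p.1 a p.2 ∈ A} : Finset _)) := by
      simp only [hn, card_filter, Fintype.sum_prod_type]
    rw [this, mul_comm, hq, ← card_univ, ← card_product]
    refine card_bij' (fun p _ => (update p.1 a p.2, p.1 a)) (fun p _ => (update p.1 a p.2, p.1 a))
      ?_ ?_ ?_ ?_
    · simp
    · simp
    · simp
    · simp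
  have h2 : ∑ w, n w ^ 2 = q ^ 2 * #{v : κ → F | v ∈ A ∧ v ∘ Equiv.swap a b ∈ A} := by
    have : ∑ w, n w ^ 2 = #(({p : (κ → F) × F × F |
        update p.1 a p.2.1 ∈ A ∧ update p.1 a p.2.2 ∈ A} : Finset _)) := by
      simp only [hn, card_filter, Fintype.sum_prod_type, sq, sum_mul_sum]
      refine sum_congr rfl fun w _ => sum_congr rfl fun u _ => sum_congr rfl fun u' _ => ?_
      by_cases h : update w a u ∈ A <;> by_cases h' : update w a u' ∈ A <;> simp [h, h']
    have key : ∀ w : κ → F, ∀ u u', update (update w a u) b u' ∘ Equiv.swap a b =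
        update (update w a u') b u := by
      intro w u u'
      funext i
      by_cases ha : i = a
      · subst ha; simp [hab]
      by_cases hb : i = b
      · subst hb; simp [hab]
      simp [Equiv.swap_apply_of_ne_of_ne ha hb, ha, hb]
    rw [this, mul_comm, hq, sq, ← card_univ, ← card_product, ← card_product]
    refine card_bij' (fun p _ => (update (update p.1 a p.2.1) b p.2.2, p.1 a, p.1 b))
      (fun p _ => (update (update p.1 a p.2.1) b p.2.2, p.1 a, p.1 b)) ?_ ?_ ?_ ?_
    · rintro ⟨w, u, u'⟩ h
      simpa [key, hA] using h
    · rintro ⟨v, u, u'⟩ h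
      simp only [univ_product_univ, mem_product, mem_filter, mem_univ, true_and, and_true] at h ⊢
      have e : ∀ x, update (update (update v a u) b u') a x = update (update v a x) b u' := by
        intro x
        rw [update_comm hab.symm, update_idem]
      rw [e, e, hA, hA, update_eq_self]
      refine ⟨h.1, ?_⟩
      have := h.2
      have e2 : v ∘ Equiv.swap a b = update (update v a (v b)) b (v a) := by
        simpa using key v (v a) (v b)
      rwa [e2, hA] at this
    · rintro ⟨w, u, u'⟩ -
      have e : update (update (update (update w a u) b u') a (w a)) b (w b) = w := by
        rw [update_comm hab.symm, update_idem, update_idem, update_eq_self, update_eq_self]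
      simp [e, hab]
    · rintro ⟨w, u, u'⟩ -
      have e : update (update (update (update w a u) b u') a (w a)) b (w b) = w := by
        rw [update_comm hab.symm, update_idem, update_idem, update_eq_self, update_eq_self]
      simp [e, hab]
  have h3 := sq_sum_le_card_mul_sum_sq (s := (univ : Finset (κ → F))) (f := n)
  rw [h1, h2, card_univ] at h3
  have h4 : q ^ 2 * #A ^ 2 ≤ q ^ 2 * (Fintype.card (κ → F) *
      #{v : κ → F | v ∈ A ∧ v ∘ Equiv.swap a b ∈ A}) := by
    linarith
  exact Nat.le_of_mul_le_mul_left h4 (by positivity)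

open Classical in
/-- The points all of whose selections, restricted to selections choosing `false` off `J`,
lie in `D`. -/
noncomputable def doublingOn {ι F : Type} [Fintype ι] [DecidableEq ι] [Fintype F]
    (D : Finset (ι → F))
    (J : Finset ι) : Finset (ι × Bool → F) :=
  {v | ∀ b : ι → Bool, (∀ i ∉ J, b i = false) → (fun i => v (i, b i)) ∈ D}

theorem mem_doublingOn {ι F : Type} [Fintype ι] [DecidableEq ι] [Fintype F] {D : Finset (ι → F)}
    {J : Finset ι} {v : ι × Bool → F} : v ∈ doublingOn D J ↔
      ∀ b : ι → Bool, (∀ i ∉ J, b i = false) → (fun i => v (i, b i)) ∈ D := by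
  simp [doublingOn]

theorem pow_mul_card_le_card_doublingOn {ι F : Type} [Fintype ι] [DecidableEq ι] [Fintype F]
    [Nonempty F]
    {D : Finset (ι → F)} {δ : ℝ} (hδ : 0 < δ)
    (hD : δ * Fintype.card (ι → F) ≤ #D) (J : Finset ι) :
    δ ^ 2 ^ #J * Fintype.card (ι × Bool → F) ≤ #(doublingOn D J) := by
  classical
  induction J using Finset.induction_on with
  | empty =>
    have hle : #(D ×ˢ (univ : Finset (ι → F))) ≤ #(doublingOn D ∅) := by
      refine card_le_card_of_injOn (fun p i => if i.2 then p.2 i.1 else p.1 i.1) ?_ ?_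
      · rintro ⟨d, w⟩ h
        simp only [coe_product, Set.mem_prod, mem_coe] at h
        rw [mem_coe, mem_doublingOn]
        intro b hb
        have : b = fun _ => false := funext fun i => hb i (by simp)
        subst this
        simpa using h.1
      · rintro ⟨d, w⟩ - ⟨d', w'⟩ - h
        have h1 : d = d' := funext fun i => by simpa using congrFun h (i, false)
        have h2 : w = w' := funext fun i => by simpa using congrFun h (i, true)
        rw [h1, h2]
    rw [card_product, card_univ] at hle
    have hc : Fintype.card (ι × Bool → F) = Fintype.card (ι → F) * Fintype.card (ι → F) := by
      simp [Fintype.card_prod, mul_two, pow_add]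
    have hle' : (#D : ℝ) * Fintype.card (ι → F) ≤ #(doublingOn D ∅) := by exact_mod_cast hle
    rw [hc]
    push_cast
    refine le_trans ?_ hle'
    have : (0 : ℝ) ≤ Fintype.card (ι → F) := by positivity
    simp only [Finset.card_empty, pow_zero, pow_one]
    calc _ = (δ * Fintype.card (ι → F)) * Fintype.card (ι → F) := by simp [mul_assoc]
      _ ≤ _ := mul_le_mul_of_nonneg_right hD this
  | insert j J hj ih =>
    have hne : ((j, false) : ι × Bool) ≠ (j, true) := by simp
    have h1 := sq_card_le_card_swap (doublingOn D J) hne (by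
      intro w u
      simp only [mem_doublingOn]
      refine forall_congr' fun b => forall_congr' fun hb => ?_
      have : ∀ i, update w (j, true) u (i, b i) = w (i, b i) := by
        intro i
        refine update_of_ne ?_ _ _
        rintro h
        obtain ⟨rfl, h2⟩ := Prod.mk.inj h
        rw [hb _ hj] at h2
        exact absurd h2 (by simp)
      simp only [this])
    have h2 : #{v : ι × Bool → F | v ∈ doublingOn D J ∧
        v ∘ Equiv.swap (j, false) (j, true) ∈ doublingOn D J} ≤ #(doublingOn D (insert j J)) := by
      refine card_le_card fun v hv => ?_
      simp only [mem_filter, mem_univ, true_and, mem_doublingOn] at hv ⊢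
      intro b hb
      by_cases hbj : b j = false
      · refine hv.1 b fun i hi => ?_
        by_cases hij : i = j
        · rw [hij, hbj]
        · exact hb i (by simp [hij, hi])
      · have := hv.2 (update b j false) (fun i hi => by
          by_cases hij : i = j
          · simp [hij]
          · simpa [hij] using hb i (by simp [hij, hi]))
        convert this using 2 with i
        by_cases hij : i = j
        · subst hij
          simp at hbj
          simp [hbj]
        · simp only [comp_apply, update_of_ne hij]
          rw [Equiv.swap_apply_of_ne_of_ne] <;> simp [hij]
    have h3 : (#(doublingOn D J) : ℝ) ^ 2 ≤
        Fintype.card (ι × Bool → F) * #(doublingOn D (insert j J)) := by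
      have := h1.trans (Nat.mul_le_mul_left _ h2)
      exact_mod_cast this
    have hpos : (0 : ℝ) < Fintype.card (ι × Bool → F) := by exact_mod_cast Fintype.card_pos
    rw [card_insert_of_notMem hj, pow_succ 2, pow_mul]
    have h4 : (δ ^ 2 ^ #J * Fintype.card (ι × Bool → F)) ^ 2 ≤ (#(doublingOn D J) : ℝ) ^ 2 :=
      pow_le_pow_left₀ (by positivity) ih 2
    have h5 := h4.trans h3
    rw [mul_pow, sq (Fintype.card (ι × Bool → F) : ℝ), ← mul_assoc, mul_comm] at h5
    exact le_of_mul_le_mul_left h5 hpos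

/-- The binary digits of a finite string, continued by zeros. -/
def bits {m : ℕ} (u : Fin m → Bool) (i : ℕ) : Bool := if h : i < m then u ⟨i, h⟩ else false

open Classical in
/-- The points whose coordinate `τ` agrees, up to `h` digits, with the value of `g` at the
coordinates `ρ`. -/
noncomputable def agreeSet {ι : Type} [Fintype ι] [DecidableEq ι] {m k : ℕ}
    (g : (Fin k → Fin m → Bool) → ℕ → Bool) (ρ : Fin k → ι) (τ : ι) (h : ℕ) :
    Finset (ι → Fin m → Bool) :=
  {v | ∀ i < h, g (v ∘ ρ) i = bits (v τ) i}

theorem card_agreeSet_mul_le {ι : Type} [Fintype ι] [DecidableEq ι] {m k : ℕ}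
    (g : (Fin k → Fin m → Bool) → ℕ → Bool) {ρ : Fin k → ι} {τ : ι} (hτ : ∀ j, ρ j ≠ τ)
    {h : ℕ} (hm : h ≤ m) :
    #(agreeSet g ρ τ h) * 2 ^ h ≤ Fintype.card (ι → Fin m → Bool) := by
  have : 2 ^ h = #(univ : Finset (Fin h → Bool)) := by simp
  rw [this, ← card_product, ← card_univ]
  refine card_le_card_of_injOn (fun p => update p.1 τ
    (fun i => if hi : (i : ℕ) < h then p.2 ⟨i, hi⟩ else p.1 τ i)) (fun _ _ => by simp) ?_
  rintro ⟨v, w⟩ hv ⟨v', w'⟩ hv' heq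
  simp only [coe_product, Set.mem_prod, mem_coe, agreeSet, mem_filter, mem_univ, true_and,
    and_true] at hv hv'
  have hoff : ∀ σ, σ ≠ τ → v σ = v' σ := fun σ hσ => by
    simpa [hσ] using congrFun heq σ
  have hτeq := congrFun heq τ
  simp only [update_self] at hτeq
  have hw : w = w' := by
    funext i
    simpa using congrFun hτeq ⟨i, i.2.trans_le hm⟩
  have hρ : v ∘ ρ = v' ∘ ρ := funext fun j => hoff _ (hτ j)
  have hvτ : v τ = v' τ := by
    funext i
    by_cases hi : (i : ℕ) < h
    · have h1 := hv i hi
      have h2 := hv' i hi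
      rw [hρ, h2] at h1
      simpa [bits] using h1.symm
    · simpa [hi] using congrFun hτeq i
  have : v = v' := by
    funext σ
    by_cases hσ : σ = τ
    · rw [hσ, hvτ]
    · exact hoff σ hσ
  rw [this, hw]

/-- A sequence of sets of points with strings of growing length as coordinates is positive if the
densities of its members are eventually bounded away from zero. -/
def Positive {ι : Type} [Fintype ι] [DecidableEq ι] (E : ∀ m, Finset (ι → Fin m → Bool)) : Prop :=
  ∃ δ : ℝ, 0 < δ ∧ ∃ m₀ : ℕ, ∀ m ≥ m₀, δ * Fintype.card (ι → Fin m → Bool) ≤ #(E m)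

theorem Positive.doubling {ι : Type} [Fintype ι] [DecidableEq ι]
    {E : ∀ m, Finset (ι → Fin m → Bool)} (hE : Positive E) :
    Positive fun m => doublingOn (E m) univ := by
  obtain ⟨δ, hδ, m₀, h⟩ := hE
  exact ⟨_, pow_pos hδ _, m₀, fun m hm => pow_mul_card_le_card_doublingOn hδ (h m hm) univ⟩

/-- From a positive sequence one can remove all agreements of finitely many functions with an
independent coordinate up to a sufficiently large number of digits. -/
theorem Positive.exists_disagree {ι : Type} [Fintype ι] [DecidableEq ι]
    {E : ∀ m, Finset (ι → Fin m → Bool)} (hE : Positive E) (k : ℕ → ℕ)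
    (g : ∀ s m, (Fin (k s) → Fin m → Bool) → ℕ → Bool) (N : ℕ) :
    ∃ h : ℕ, ∃ E' : ∀ m, Finset (ι → Fin m → Bool), Positive E' ∧ (∀ m, E' m ⊆ E m) ∧
      ∀ m, ∀ v ∈ E' m, ∀ s < N, ∀ (ρ : Fin (k s) → ι) (τ : ι), (∀ j, ρ j ≠ τ) →
        ∃ i < h, g s m (v ∘ ρ) i ≠ bits (v τ) i := by
  classical
  obtain ⟨δ, hδ, m₀, hE⟩ := hE
  let Q : Finset (Σ s : Fin N, (Fin (k s) → ι) × ι) := {q | ∀ j, q.2.1 j ≠ q.2.2}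
  obtain ⟨h, hh⟩ := pow_unbounded_of_one_lt (#Q / (δ / 2) : ℝ) one_lt_two
  refine ⟨h, fun m => E m \ Q.biUnion fun q => agreeSet (g q.1 m) q.2.1 q.2.2 h,
    ⟨δ / 2, half_pos hδ, max m₀ h, fun m hm => ?_⟩, fun m => sdiff_subset, ?_⟩
  · have hc := hE m ((le_max_left _ _).trans hm)
    have hmh : h ≤ m := (le_max_right _ _).trans hm
    set C : ℝ := (Fintype.card (ι → Fin m → Bool) : ℝ) with hC
    set R := Q.biUnion fun q => agreeSet (g q.1 m) q.2.1 q.2.2 h with hR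
    have hRc : #R * 2 ^ h ≤ #Q * Fintype.card (ι → Fin m → Bool) := by
      calc #R * 2 ^ h ≤ (∑ q ∈ Q, #(agreeSet (g q.1 m) q.2.1 q.2.2 h)) * 2 ^ h :=
            Nat.mul_le_mul_right _ card_biUnion_le
        _ = ∑ q ∈ Q, #(agreeSet (g q.1 m) q.2.1 q.2.2 h) * 2 ^ h := by rw [sum_mul]
        _ ≤ ∑ q ∈ Q, Fintype.card (ι → Fin m → Bool) := by
            refine sum_le_sum fun q hq => card_agreeSet_mul_le _ ?_ hmh
            simpa [Q] using hq
        _ = _ := by rw [sum_const, smul_eq_mul]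
    have hRc' : (#R : ℝ) * 2 ^ h ≤ #Q * C := by rw [hC]; exact_mod_cast hRc
    have hC0 : 0 ≤ C := by rw [hC]; positivity
    have hpow : (0 : ℝ) < 2 ^ h := by positivity
    have hQ : (#Q : ℝ) ≤ 2 ^ h * (δ / 2) := by
      rw [div_lt_iff₀ (half_pos hδ)] at hh
      exact hh.le
    have hR2 : (#R : ℝ) ≤ δ / 2 * C := by
      refine le_of_mul_le_mul_right ?_ hpow
      calc (#R : ℝ) * 2 ^ h ≤ #Q * C := hRc'
        _ ≤ (2 ^ h * (δ / 2)) * C := mul_le_mul_of_nonneg_right hQ hC0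
        _ = _ := by ring
    have hsd : (#(E m) : ℝ) ≤ #(E m \ R) + #R := by
      exact_mod_cast (card_le_card_sdiff_add_card (s := E m) (t := R))
    linarith
  · intro m v hv s hs ρ τ hρ
    by_contra! hcon
    rw [mem_sdiff, mem_biUnion] at hv
    refine hv.2 ⟨⟨⟨s, hs⟩, ρ, τ⟩, by simpa [Q] using hρ, ?_⟩
    simpa [agreeSet] using hcon

/-- The nodes of the full binary tree at a given level. -/
def Node : ℕ → Type
  | 0 => Unit
  | n + 1 => Node n × Bool

instance instFintypeNode : (n : ℕ) → Fintype (Node n)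
  | 0 => inferInstanceAs (Fintype Unit)
  | n + 1 => have := instFintypeNode n; inferInstanceAs (Fintype (Node n × Bool))

instance instDecidableEqNode : (n : ℕ) → DecidableEq (Node n)
  | 0 => inferInstanceAs (DecidableEq Unit)
  | n + 1 => have := instDecidableEqNode n; inferInstanceAs (DecidableEq (Node n × Bool))

open Classical in
/-- The node of level `n` on the branch given by a set of natural numbers. -/
noncomputable def node (x : Set ℕ) : (n : ℕ) → Node n
  | 0 => ()
  | n + 1 => (node x n, decide (n ∈ x))

theorem node_eq_of_le {x y : Set ℕ} {l n : ℕ} (hln : l ≤ n) (h : node x n = node y n) :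
    node x l = node y l := by
  induction n, hln using Nat.le_induction with
  | base => exact h
  | succ n _ ih => exact ih (Prod.mk.inj h).1

theorem exists_node_ne {x y : Set ℕ} (h : x ≠ y) : ∃ l, node x l ≠ node y l := by
  by_contra! hcon
  refine h (Set.ext fun n => ?_)
  simpa using (Prod.mk.inj (hcon (n + 1))).2

theorem exists_node_eq {l : ℕ} (σ : Node l) : ∃ x, node x l = σ := by
  induction l with
  | zero => exact ⟨∅, rfl⟩
  | succ l ih =>
    obtain ⟨σ, b⟩ := σ
    obtain ⟨x, hx⟩ := ih σ
    have key : ∀ n ≤ l, ∀ y : Set ℕ, (∀ i < l, i ∈ y ↔ i ∈ x) → node y n = node x n := by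
      intro n hn y hy
      induction n with
      | zero => rfl
      | succ n ih => exact Prod.ext (ih (by omega)) (by simp [node, hy n hn])
    refine ⟨{i | (i < l ∧ i ∈ x) ∨ (i = l ∧ b = true)}, Prod.ext ?_ ?_⟩
    · exact (key l le_rfl _ fun i hi => by simp [hi, hi.ne]).trans hx
    · simp [node]

/-- If every selection from a member of `E (n + 1)` lies in `E n`, then a member of `E n` restricts
to a member of `E l` along any system of branches through the nodes of level `l`. -/
theorem comp_node_mem {m : ℕ} {E : ∀ l, Finset (Node l → Fin m → Bool)}
    (hE : ∀ l, ∀ v ∈ E (l + 1), ∀ b : Node l → Bool, (fun σ => v (σ, b σ)) ∈ E l)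
    {l n : ℕ} (hln : l ≤ n) {w : Node l → Set ℕ} (hw : ∀ σ, node (w σ) l = σ)
    {v : Node n → Fin m → Bool} (hv : v ∈ E n) : (fun σ => v (node (w σ) n)) ∈ E l := by
  classical
  induction n, hln using Nat.le_induction with
  | base => simpa [hw] using hv
  | succ n hln ih =>
    have hinj : Injective fun σ => node (w σ) n := by
      intro σ σ' h
      simpa [hw] using node_eq_of_le hln h
    have := ih (hE n v hv (extend (fun σ => node (w σ) n) (fun σ => decide (n ∈ w σ))
      fun _ => false))
    simp only [hinj.extend_apply] at this
    exact this

/-- Given countably many functions of finitely many strings, there are assignments of strings to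
the nodes of the binary tree such that no function applied to strings at some branches agrees with
the string at another branch; the place of disagreement is bounded independently of the
assignment. -/
theorem exists_independent_strings (k : ℕ → ℕ)
    (g : ∀ s m, (Fin (k s) → Fin m → Bool) → ℕ → Bool) :
    ∃ h : ℕ → ℕ, ∀ n, ∃ m ≥ n, ∃ v : Node n → Fin m → Bool, ∀ l ≤ n, ∀ s < l,
      ∀ (y : Fin (k s) → Set ℕ) (x : Set ℕ),
        Set.InjOn (fun z => node z l) (insert x (Set.range y)) → (∀ j, y j ≠ x) →
        ∃ i < h l, g s m (fun j => v (node (y j) n)) i ≠ bits (v (node x n)) i := by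
  classical
  have step : ∀ (l : ℕ) (E : {E : ∀ m, Finset (Node l → Fin m → Bool) // Positive E}),
      ∃ E' : {E' : ∀ m, Finset (Node (l + 1) → Fin m → Bool) // Positive E'},
        (∀ m, E'.1 m ⊆ doublingOn (E.1 m) univ) ∧
        ∃ h, ∀ m, ∀ v ∈ E'.1 m, ∀ s < l + 1, ∀ (ρ : Fin (k s) → Node (l + 1)) (τ : Node (l + 1)),
          (∀ j, ρ j ≠ τ) → ∃ i < h, g s m (v ∘ ρ) i ≠ bits (v τ) i := by
    intro l E
    obtain ⟨h, E', hpos, hsub, hh⟩ := E.2.doubling.exists_disagree k g (l + 1)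
    exact ⟨⟨E', hpos⟩, hsub, h, hh⟩
  choose next hsub h hh using step
  let E : ∀ l, {E : ∀ m, Finset (Node l → Fin m → Bool) // Positive E} := fun l =>
    Nat.rec ⟨fun _ => univ, 1, one_pos, 0, fun m _ => by simp⟩ next l
  refine ⟨fun l => Nat.casesOn l 0 fun l => h l (E l), fun n => ?_⟩
  obtain ⟨δ, hδ, m₀, hm₀⟩ := (E n).2
  have hne : ((E n).1 (max m₀ n)).Nonempty := by
    rw [← card_pos]
    have hpos : (0 : ℝ) < Fintype.card (Node n → Fin (max m₀ n) → Bool) := by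
      exact_mod_cast Fintype.card_pos
    exact_mod_cast (mul_pos hδ hpos).trans_le (hm₀ _ (le_max_left _ _))
  obtain ⟨v, hv⟩ := hne
  refine ⟨max m₀ n, le_max_right _ _, v, fun l hl s hs y x hinj hx => ?_⟩
  obtain _ | l := l
  · omega
  choose z hz using fun σ : Node (l + 1) => exists_node_eq σ
  let S := insert x (Set.range y)
  let w : Node (l + 1) → Set ℕ := fun σ =>
    if hσ : ∃ a ∈ S, node a (l + 1) = σ then hσ.choose else z σ
  have hw : ∀ σ, node (w σ) (l + 1) = σ := by
    intro σ
    by_cases hσ : ∃ a ∈ S, node a (l + 1) = σ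
    · simp only [w, dif_pos hσ]
      exact hσ.choose_spec.2
    · simp only [w, dif_neg hσ, hz]
  have hwS : ∀ a ∈ S, w (node a (l + 1)) = a := by
    intro a ha
    have hσ : ∃ a' ∈ S, node a' (l + 1) = node a (l + 1) := ⟨a, ha, rfl⟩
    simp only [w, dif_pos hσ]
    exact hinj hσ.choose_spec.1 ha hσ.choose_spec.2
  have hmem := comp_node_mem (E := fun l => (E l).1 (max m₀ n)) (fun l v hv b =>
    mem_doublingOn.1 (hsub l (E l) _ hv) b (by simp)) hl hw hv
  obtain ⟨i, hi, hne⟩ := hh l (E l) _ _ hmem s hs (fun j => node (y j) (l + 1)) (node x (l + 1))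
    fun j hj => hx j (hinj (Set.mem_insert_of_mem _ ⟨j, rfl⟩) (Set.mem_insert _ _) hj)
  refine ⟨i, hi, ?_⟩
  rw [hwS x (Set.mem_insert _ _)] at hne
  have hy : (fun j => v (node (y j) n)) =
      (fun σ => v (node (w σ) n)) ∘ fun j => node (y j) (l + 1) := by
    funext j
    simp only [comp_apply, hwS (y j) (Set.mem_insert_of_mem _ ⟨j, rfl⟩)]
  rwa [hy]

end Combinatorics

end Arith

namespace Arith

section Digits

variable {M : Type} [arith.Structure M]

/-- The closed term denoting a numeral. -/
def numeralTerm {α : Type} : ℕ → arith.Term α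
  | 0 => Term.func (L := arith) arithFunc.zero ![]
  | n + 1 => Term.func (L := arith) arithFunc.add
      ![numeralTerm n, Term.func (L := arith) arithFunc.one ![] ]

theorem realize_func_zero {α : Type} (v : α → M) :
    (Term.func (L := arith) arithFunc.zero ![] : arith.Term α).realize v = zeroM M := by
  simp only [Term.realize, zeroM]
  congr 1
  exact Subsingleton.elim _ _

theorem realize_func_one {α : Type} (v : α → M) :
    (Term.func (L := arith) arithFunc.one ![] : arith.Term α).realize v = oneM M := by
  simp only [Term.realize, oneM]
  congr 1
  exact Subsingleton.elim _ _

theorem realize_func_add {α : Type} (v : α → M) (s t : arith.Term α) :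
    (Term.func (L := arith) arithFunc.add ![s, t] : arith.Term α).realize v =
      addM (s.realize v) (t.realize v) := by
  simp only [Term.realize, addM]
  congr 1
  funext i
  fin_cases i <;> rfl

theorem realize_func_mul {α : Type} (v : α → M) (s t : arith.Term α) :
    (Term.func (L := arith) arithFunc.mul ![s, t] : arith.Term α).realize v =
      mulM (s.realize v) (t.realize v) := by
  simp only [Term.realize, mulM]
  congr 1
  funext i
  fin_cases i <;> rfl

theorem realize_numeralTerm {α : Type} (v : α → M) (n : ℕ) :
    (numeralTerm n : arith.Term α).realize v = numeral M n := by
  induction n with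
  | zero => exact realize_func_zero v
  | succ n ih => rw [numeralTerm, realize_func_add, realize_func_one, ih, numeral]

/-- The formula expressing that an element is a given numeral. -/
def numeralFormula (n : ℕ) : arith.Formula (Fin 1) := Term.equal (Term.var 0) (numeralTerm n)

theorem realize_numeralFormula (n : ℕ) (a : M) :
    (numeralFormula n).Realize (fun _ => a) ↔ a = numeral M n := by
  simp [numeralFormula, Formula.realize_equal, realize_numeralTerm]

/-- The formula expressing that a given binary digit of an element is `1`. -/
def digitFormula (i : ℕ) : arith.Formula (Fin 1) :=
  let u : arith.Term (Fin 1 ⊕ Fin 2) := Term.var (Sum.inr 0)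
  let v : arith.Term (Fin 1 ⊕ Fin 2) := Term.var (Sum.inr 1)
  BoundedFormula.ex (BoundedFormula.ex
    ((Term.bdEqual (Term.var (Sum.inl 0)) (Term.func (L := arith) arithFunc.add
        ![Term.func (L := arith) arithFunc.mul ![u, numeralTerm (2 ^ (i + 1))],
          Term.func (L := arith) arithFunc.add ![numeralTerm (2 ^ i), v] ])) ⊓
      BoundedFormula.rel (L := arith) arithRel.lt ![v, numeralTerm (2 ^ i)]))

theorem realize_digitFormula (i : ℕ) (a : M) :
    (digitFormula i).Realize (fun _ => a) ↔ digitB a i := by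
  simp only [digitFormula, Formula.Realize, BoundedFormula.realize_ex, BoundedFormula.realize_inf,
    BoundedFormula.realize_bdEqual, realize_func_add, realize_func_mul, realize_numeralTerm,
    digitB, ltM]
  refine exists_congr fun u => exists_congr fun v => and_congr (Iff.of_eq ?_) (Iff.of_eq ?_)
  · rfl
  · refine congrArg (Structure.RelMap (L := arith) arithRel.lt) ?_
    funext j
    fin_cases j
    · rfl
    · exact realize_numeralTerm _ _

theorem digitB_elementary {N : Type} [arith.Structure N] (S : arith.ElementarySubstructure N)
    (a : S) (i : ℕ) : digitB a i ↔ digitB (a : N) i := by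
  rw [← realize_digitFormula, ← realize_digitFormula]
  exact (S.subtype.map_formula (digitFormula i) fun _ => a).symm

theorem isStd_elementary {N : Type} [arith.Structure N] (S : arith.ElementarySubstructure N)
    (a : S) : IsStd a ↔ IsStd (a : N) := by
  refine exists_congr fun n => ?_
  rw [← realize_numeralFormula, ← realize_numeralFormula]
  exact (S.subtype.map_formula (numeralFormula n) fun _ => a).symm

theorem numeral_add (hM : IsPAModel M) (a b : ℕ) :
    addM (numeral M a) (numeral M b) = numeral M (a + b) := by
  induction b with
  | zero => exact hM.1 _
  | succ b ih => rw [numeral, hM.2.1, ih, ← Nat.add_assoc, numeral]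

theorem numeral_mul (hM : IsPAModel M) (a b : ℕ) :
    mulM (numeral M a) (numeral M b) = numeral M (a * b) := by
  induction b with
  | zero => exact hM.2.2.1 _
  | succ b ih => rw [numeral, hM.2.2.2.1, ih, numeral_add hM, Nat.mul_succ]

theorem numeral_injective (hM : IsPAModel M) : Function.Injective (numeral M) := by
  obtain ⟨-, -, -, -, -, -, h0, hs, -⟩ := hM
  intro a
  induction a with
  | zero =>
    rintro (_ | b) h
    · rfl
    · exact absurd h.symm (h0 _)
  | succ a ih =>
    rintro (_ | b) h
    · exact absurd h (h0 _)
    · rw [ih (hs _ _ h)]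

theorem ltM_numeral_iff (hM : IsPAModel M) (x : M) (b : ℕ) :
    ltM x (numeral M b) ↔ ∃ a < b, x = numeral M a := by
  induction b with
  | zero => exact iff_of_false (hM.2.2.2.2.1 x) (by simp)
  | succ b ih =>
    rw [numeral, hM.2.2.2.2.2.1, ih]
    constructor
    · rintro (⟨a, ha, rfl⟩ | rfl)
      · exact ⟨a, by omega, rfl⟩
      · exact ⟨b, by omega, rfl⟩
    · rintro ⟨a, ha, rfl⟩
      rcases Nat.lt_succ_iff_lt_or_eq.1 ha with h | rfl
      · exact Or.inl ⟨a, h, rfl⟩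
      · exact Or.inr rfl

theorem eq_zero_or_eq_succ (hM : IsPAModel M) (x : M) :
    x = zeroM M ∨ ∃ y, x = addM y (oneM M) := by
  obtain ⟨-, -, -, -, -, -, -, -, hind⟩ := hM
  refine hind {x | x = zeroM M ∨ ∃ y, x = addM y (oneM M)} ?_ (Or.inl rfl)
    (fun x _ => Or.inr ⟨x, rfl⟩) x
  refine Set.Definable.mono (A := ∅) ?_ (Set.empty_subset _)
  rw [Set.empty_definable_iff]
  refine ⟨(Term.equal (Term.var 0) (Term.func (L := arith) arithFunc.zero ![])) ⊔
    BoundedFormula.ex (Term.bdEqual (Term.var (Sum.inl 0)) (Term.func (L := arith) arithFunc.add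
      ![Term.var (Sum.inr 0), Term.func (L := arith) arithFunc.one ![] ])), ?_⟩
  ext v
  simp only [Set.mem_ofPred_eq, Formula.realize_sup, Formula.realize_equal, realize_func_zero]
  simp only [Formula.Realize, BoundedFormula.realize_ex, BoundedFormula.realize_bdEqual,
    realize_func_add, realize_func_one]
  rfl

theorem isStd_right_of_addM_eq (hM : IsPAModel M) {n : ℕ} :
    ∀ {x y : M}, addM x y = numeral M n → IsStd y := by
  induction n with
  | zero =>
    intro x y h
    rcases eq_zero_or_eq_succ hM y with rfl | ⟨z, rfl⟩
    · exact ⟨0, rfl⟩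
    · rw [hM.2.1] at h
      exact absurd h (hM.2.2.2.2.2.2.1 _)
  | succ n ih =>
    intro x y h
    rcases eq_zero_or_eq_succ hM y with rfl | ⟨z, rfl⟩
    · exact ⟨0, rfl⟩
    · rw [hM.2.1] at h
      obtain ⟨a, rfl⟩ := ih (hM.2.2.2.2.2.2.2.1 _ _ h)
      exact ⟨a + 1, rfl⟩

theorem isStd_left_of_addM_eq (hM : IsPAModel M) {x : M} {b : ℕ} :
    ∀ {n : ℕ}, addM x (numeral M b) = numeral M n → IsStd x := by
  induction b with
  | zero =>
    intro n h
    exact ⟨n, (hM.1 x).symm.trans h⟩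
  | succ b ih =>
    rintro (_ | n) h
    · rw [numeral.eq_2, hM.2.1] at h
      exact absurd h (hM.2.2.2.2.2.2.1 _)
    · rw [numeral, hM.2.1] at h
      exact ih (hM.2.2.2.2.2.2.2.1 _ _ h)

theorem testBit_eq_true_iff (a i : ℕ) :
    a.testBit i = true ↔ ∃ u v, a = u * 2 ^ (i + 1) + (2 ^ i + v) ∧ v < 2 ^ i := by
  rw [Nat.testBit_eq_decide_div_mod_eq, decide_eq_true_iff]
  have hpos : 0 < 2 ^ i := by positivity
  constructor
  · intro h
    refine ⟨a / 2 ^ i / 2, a % 2 ^ i, ?_, Nat.mod_lt _ hpos⟩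
    have h1 := Nat.div_add_mod a (2 ^ i)
    have h2 := Nat.div_add_mod (a / 2 ^ i) 2
    rw [h] at h2
    rw [pow_succ]
    calc a = 2 ^ i * (2 * (a / 2 ^ i / 2) + 1) + a % 2 ^ i := by rw [h2, h1]
      _ = _ := by ring
  · rintro ⟨u, v, rfl, hv⟩
    have : u * 2 ^ (i + 1) + (2 ^ i + v) = v + 2 ^ i * (2 * u + 1) := by ring
    rw [this, Nat.add_mul_div_left _ _ hpos, Nat.div_eq_of_lt hv]
    omega

theorem digitB_numeral (hM : IsPAModel M) (a i : ℕ) :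
    digitB (numeral M a) i ↔ a.testBit i = true := by
  rw [testBit_eq_true_iff]
  constructor
  · rintro ⟨u, v, h, hv⟩
    obtain ⟨v, hvi, rfl⟩ := (ltM_numeral_iff hM _ _).1 hv
    rw [numeral_add hM] at h
    obtain ⟨p, hp⟩ := isStd_left_of_addM_eq hM h.symm
    obtain ⟨q, hq⟩ := Nat.exists_eq_succ_of_ne_zero (pow_ne_zero (i + 1) two_ne_zero)
    have hu : IsStd u := by
      rw [hq, Nat.succ_eq_add_one, numeral, hM.2.2.2.1] at hp
      exact isStd_right_of_addM_eq hM hp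
    obtain ⟨u, rfl⟩ := hu
    rw [numeral_mul hM, numeral_add hM] at h
    exact ⟨u, v, numeral_injective hM h, hvi⟩
  · rintro ⟨u, v, rfl, hv⟩
    exact ⟨numeral M u, numeral M v, by simp only [numeral_add hM, numeral_mul hM],
      (ltM_numeral_iff hM _ _).2 ⟨v, hv, rfl⟩⟩

theorem mem_SSy_elementary {N : Type} [arith.Structure N] (S : arith.ElementarySubstructure N)
    (Z : Set ℕ) : Z ∈ SSy S ↔ ∃ a ∈ S, ¬ IsStd (a : N) ∧ ∀ i, i ∈ Z ↔ digitB (a : N) i := by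
  constructor
  · rintro ⟨a, ha, hd⟩
    exact ⟨a, a.2, fun h => ha ((isStd_elementary S a).2 h),
      fun i => (hd i).trans (digitB_elementary S a i)⟩
  · rintro ⟨a, haS, ha, hd⟩
    exact ⟨⟨a, haS⟩, fun h => ha ((isStd_elementary S ⟨a, haS⟩).1 h),
      fun i => (hd i).trans (digitB_elementary S ⟨a, haS⟩ i).symm⟩

theorem mk_SSy_le : Cardinal.mk (SSy M) ≤ Cardinal.mk M := by
  refine (Cardinal.mk_le_mk_of_subset (t := Set.range fun a : M => {i | digitB a i}) ?_).trans
    Cardinal.mk_range_le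
  rintro Z ⟨a, -, ha⟩
  exact ⟨a, Set.ext fun i => (ha i).symm⟩

end Digits

end Arith

namespace Arith

section Hull

open Filter

/-- The language of arithmetic together with Skolem functions for its formulas. -/
abbrev skolemArith : FirstOrder.Language := arith.sum arith.skolem₁

instance : Countable (Σ n, skolemArith.Functions n) := by
  have h1 : Countable (Σ n, arith.Functions n) := by
    have : Function.Injective fun f : Σ n, arithFunc n => match f with
        | ⟨_, .zero⟩ => 0
        | ⟨_, .one⟩ => 1
        | ⟨_, .add⟩ => 2
        | ⟨_, .mul⟩ => 3 := by
      rintro ⟨_, _ | _ | _ | _⟩ ⟨_, _ | _ | _ | _⟩ h <;> first | rfl | exact absurd h (by decide)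
    exact this.countable
  have h2 : Countable (Σ n, arith.Relations n) := by
    have : Subsingleton (Σ n, arithRel n) := ⟨by rintro ⟨_, ⟨⟩⟩ ⟨_, ⟨⟩⟩; rfl⟩
    exact inferInstanceAs (Countable (Σ n, arithRel n))
  have h3 : arith.card ≤ Cardinal.aleph0 := by
    rw [Language.card, Cardinal.mk_le_aleph0_iff]
    exact inferInstanceAs (Countable ((Σ n, arith.Functions n) ⊕ Σ n, arith.Relations n))
  rw [← Cardinal.mk_le_aleph0_iff]
  exact card_functions_sum_skolem₁_le.trans (max_le le_rfl h3)

/-- Every term uses only finitely many of its variables. -/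
theorem exists_eq_relabel_fin {L : FirstOrder.Language} {P V : Type} (t : L.Term (P ⊕ V)) :
    ∃ (k : ℕ) (s : L.Term (P ⊕ Fin k)) (y : Fin k → V), t = s.relabel (Sum.map id y) := by
  induction t with
  | var z =>
    rcases z with p | x
    · exact ⟨0, Term.var (Sum.inl p), Fin.elim0, rfl⟩
    · exact ⟨1, Term.var (Sum.inr 0), fun _ => x, rfl⟩
  | func f ts ih =>
    choose k s y h using ih
    let e := Fintype.equivFin (Σ i, Fin (k i))
    refine ⟨_, Term.func f fun i => (s i).relabel (Sum.map id fun j => e ⟨i, j⟩),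
      fun j => y (e.symm j).1 (e.symm j).2, ?_⟩
    simp only [Term.relabel]
    congr 1
    funext i
    rw [h i, Term.relabel_relabel]
    congr 1
    funext z
    rcases z with z | z
    · rfl
    · exact congrArg Sum.inr (congrArg (fun q : Σ i, Fin (k i) => y q.1 q.2)
        (e.symm_apply_apply ⟨i, z⟩)).symm

variable {M : Type} [arith.Structure M] [Nonempty M]

theorem realize_snoc_cast {u : Ultrafilter ℕ} {n : ℕ} (φ : arith.BoundedFormula Empty (n + 1))
    (f : Fin n → ℕ → M) (a : ℕ → M) :
    φ.Realize default (Fin.snoc (fun i => ((f i : ℕ → M) : (u : Filter ℕ).Product fun _ => M))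
      ((a : ℕ → M) : (u : Filter ℕ).Product fun _ => M) : Fin (n + 1) → _) ↔
    ∀ᶠ k in u, φ.Realize default (Fin.snoc (fun i => f i k) (a k) : Fin (n + 1) → M) := by
  have h := Ultraproduct.boundedFormula_realize_cast (u := u) (M := fun _ : ℕ => M) φ
    (fun e => e.elim) (Fin.snoc f a : Fin (n + 1) → ℕ → M)
  have e1 : (Fin.snoc (fun i => ((f i : ℕ → M) : (u : Filter ℕ).Product fun _ => M))
      ((a : ℕ → M) : (u : Filter ℕ).Product fun _ => M) : Fin (n + 1) → _) =
      fun i => (((Fin.snoc f a : Fin (n + 1) → ℕ → M) i : ℕ → M) :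
        (u : Filter ℕ).Product fun _ => M) := by
    funext i
    refine Fin.lastCases ?_ (fun i => ?_) i <;> simp
  have e2 (k : ℕ) : (Fin.snoc (fun i => f i k) (a k) : Fin (n + 1) → M) =
      fun i => (Fin.snoc f a : Fin (n + 1) → ℕ → M) i k := by
    funext i
    refine Fin.lastCases ?_ (fun i => ?_) i <;> simp
  simp only [e1, e2]
  convert h

theorem digitB_cast {u : Ultrafilter ℕ} (f : ℕ → M) (i : ℕ) :
    digitB ((f : ℕ → M) : (u : Filter ℕ).Product fun _ => M) i ↔ ∀ᶠ n in u, digitB (f n) i := by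
  simp only [← realize_digitFormula]
  exact Ultraproduct.realize_formula_cast (u := u) (M := fun _ : ℕ => M) (digitFormula i) fun _ => f

theorem eq_numeral_cast {u : Ultrafilter ℕ} (f : ℕ → M) (k : ℕ) :
    ((f : ℕ → M) : (u : Filter ℕ).Product fun _ => M) = numeral _ k ↔
      ∀ᶠ n in u, f n = numeral M k := by
  simp only [← realize_numeralFormula]
  exact Ultraproduct.realize_formula_cast (u := u) (M := fun _ : ℕ => M) (numeralFormula k)
    fun _ => f

/-- The diagonal embedding of a structure into its ultrapower. -/
noncomputable def diagonal (M : Type) [arith.Structure M] [Nonempty M] (u : Ultrafilter ℕ) :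
    M ↪ₑ[arith] (u : Filter ℕ).Product fun _ => M where
  toFun a := ((fun _ => a : ℕ → M) : (u : Filter ℕ).Product fun _ => M)
  map_formula' n φ x := by
    refine (Ultraproduct.realize_formula_cast (u := u) (M := fun _ : ℕ => M) φ
      fun i _ => x i).trans ?_
    simp

/-- The sequence of values of a term whose variables denote sequences. -/
noncomputable def termSeq {P V : Type} (p : P → ℕ → M) (c : V → ℕ → M)
    (t : skolemArith.Term (P ⊕ V)) : ℕ → M :=
  fun n => t.realize (Sum.elim (fun i => p i n) fun x => c x n)

/-- The elementary substructure of the ultrapower generated, under pointwise Skolem functions, by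
the sequences `p i` and the sequences `c x` for `x ∈ X`. -/
noncomputable def hull {P V : Type} (u : Ultrafilter ℕ) (p : P → ℕ → M) (c : V → ℕ → M)
    (X : Set V) : arith.ElementarySubstructure ((u : Filter ℕ).Product fun _ => M) :=
  Substructure.toElementarySubstructure
    { carrier := Set.range fun t : skolemArith.Term (P ⊕ X) =>
        ((termSeq p (fun x : X => c x) t : ℕ → M) : (u : Filter ℕ).Product fun _ => M)
      fun_mem := by
        intro n f x hx
        choose t ht using hx
        refine ⟨Term.func (Sum.inl f) t, ?_⟩
        obtain rfl := funext ht
        exact (Ultraproduct.funMap_cast (u := u) (M := fun _ : ℕ => M) f _).symm }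
    (by
      intro n φ x a h
      choose t ht using fun i => (x i).2
      have hx : Subtype.val ∘ x = fun i =>
          ((termSeq p (fun x : X => c x) (t i) : ℕ → M) : (u : Filter ℕ).Product fun _ => M) :=
        funext fun i => (ht i).symm
      induction a using Quotient.inductionOn with | _ a
      refine ⟨⟨_, Term.func (Sum.inr φ) t, rfl⟩, ?_⟩
      rw [hx] at h ⊢
      refine (realize_snoc_cast φ _ _).2 (((realize_snoc_cast φ _ a).1 h).mono fun k hk => ?_)
      exact Classical.epsilon_spec (p := fun b : M => φ.Realize default
        (Fin.snoc (fun i => termSeq p (fun x : X => c x) (t i) k) b : Fin (n + 1) → M)) ⟨_, hk⟩)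

variable {P V : Type} {u : Ultrafilter ℕ} {p : P → ℕ → M} {c : V → ℕ → M} {X Y : Set V}

theorem mem_hull {z : (u : Filter ℕ).Product fun _ => M} : z ∈ hull u p c X ↔
    ∃ t : skolemArith.Term (P ⊕ X),
      ((termSeq p (fun x : X => c x) t : ℕ → M) : (u : Filter ℕ).Product fun _ => M) = z :=
  Iff.rfl

theorem param_mem_hull (i : P) :
    ((p i : ℕ → M) : (u : Filter ℕ).Product fun _ => M) ∈ hull u p c X :=
  mem_hull.2 ⟨Term.var (Sum.inl i), rfl⟩

theorem generator_mem_hull {x : V} (hx : x ∈ X) :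
    ((c x : ℕ → M) : (u : Filter ℕ).Product fun _ => M) ∈ hull u p c X :=
  mem_hull.2 ⟨Term.var (Sum.inr ⟨x, hx⟩), rfl⟩

theorem hull_mono (h : X ⊆ Y) :
    (hull u p c X : Set ((u : Filter ℕ).Product fun _ => M)) ⊆
      (hull u p c Y : Set ((u : Filter ℕ).Product fun _ => M)) := by
  intro z hz
  obtain ⟨t, rfl⟩ := mem_hull.1 hz
  refine mem_hull.2 ⟨t.relabel (Sum.map id (Set.inclusion h)), ?_⟩
  congr 1
  funext n
  simp only [termSeq, Term.realize_relabel]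
  congr 1
  funext i
  rcases i with i | i <;> rfl

theorem mk_hull_le [Countable P] :
    Cardinal.mk (hull u p c X) ≤ max Cardinal.aleph0 (Cardinal.mk X) := by
  refine Cardinal.mk_range_le.trans (Term.card_le.trans (max_le (le_max_left _ _) ?_))
  rw [Cardinal.mk_sum, Cardinal.mk_sum]
  simp only [Cardinal.lift_id]
  refine Cardinal.add_le_of_le (le_max_left _ _) (Cardinal.add_le_of_le (le_max_left _ _) ?_ ?_) ?_
  · exact (Cardinal.mk_le_aleph0_iff.2 inferInstance).trans (le_max_left _ _)
  · exact le_max_right _ _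
  · exact (Cardinal.mk_le_aleph0_iff.2 inferInstance).trans (le_max_left _ _)

end Hull

end Arith

namespace Arith

section Independence

open Filter

/-- The number with a leading binary digit `1` followed by the given digits. -/
def code {m : ℕ} (w : Fin m → Bool) : ℕ := 2 ^ m + Nat.ofBits w

theorem testBit_code {m i : ℕ} (w : Fin m → Bool) (hi : i < m) :
    (code w).testBit i = bits w i := by
  rw [code, Nat.testBit_two_pow_add_gt hi, Nat.testBit_ofBits_lt _ _ hi, bits, dif_pos hi]

theorem lt_code {m : ℕ} (w : Fin m → Bool) : m < code w :=
  Nat.lt_two_pow_self.trans_le (Nat.le_add_right _ _)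

theorem exists_injOn_node {s : Set (Set ℕ)} (hs : s.Finite) (l₀ : ℕ) :
    ∃ l > l₀, Set.InjOn (fun z => node z l) s := by
  have h : ∀ x y : Set ℕ, ∃ l, x ≠ y → node x l ≠ node y l := fun x y => by
    by_cases hxy : x = y
    · exact ⟨0, fun h => absurd hxy h⟩
    · exact (exists_node_ne hxy).imp fun _ hl _ => hl
  choose d hd using h
  obtain ⟨b, hb⟩ := ((hs.prod hs).image fun q => d q.1 q.2).bddAbove
  refine ⟨max b l₀ + 1, by omega, fun x hx y hy hxy => by_contra fun hne => hd x y hne ?_⟩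
  refine node_eq_of_le ?_ hxy
  have := hb ⟨(x, y), ⟨hx, hy⟩, rfl⟩
  simp only at this
  omega

variable {M : Type} [arith.Structure M] [Nonempty M]

theorem not_isStd_codes (hM : IsPAModel M) {m : ℕ → ℕ} (hm : ∀ n, n ≤ m n)
    (w : ∀ n, Fin (m n) → Bool) :
    ¬ IsStd (((fun n => numeral M (code (w n))) : ℕ → M) :
      (hyperfilter ℕ : Filter ℕ).Product fun _ => M) := by
  rintro ⟨k, hk⟩
  have h := ((eq_numeral_cast _ k).1 hk).and
    ((eventually_ge_atTop k).filter_mono Nat.hyperfilter_le_atTop)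
  obtain ⟨n, hn, hkn⟩ := h.exists
  have h1 := numeral_injective hM hn
  have h2 := lt_code (w n)
  have h3 := hm n
  omega

theorem digitB_codes (hM : IsPAModel M) {m : ℕ → ℕ} (hm : ∀ n, n ≤ m n)
    (w : ∀ n, Fin (m n) → Bool) (i : ℕ) :
    digitB (((fun n => numeral M (code (w n))) : ℕ → M) :
      (hyperfilter ℕ : Filter ℕ).Product fun _ => M) i ↔
      ∀ᶠ n in hyperfilter ℕ, bits (w n) i = true := by
  rw [digitB_cast]
  refine eventually_congr (((eventually_gt_atTop i).filter_mono Nat.hyperfilter_le_atTop).mono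
    fun n hn => ?_)
  rw [digitB_numeral hM, testBit_code _ (hn.trans_le (hm n))]

/-- There are sequences of codes, one for each real, such that no real outside `Y` has its coded
set coded in the hull of `Y`, while the hulls contain `M` and code every member of `B`. -/
theorem exists_independent_generators (hM : IsPAModel M) [Countable M] {B : Set (Set ℕ)}
    (hB : B.Countable) :
    ∃ (p : M ⊕ B → ℕ → M) (c : Set ℕ → ℕ → M), (∀ a n, p (Sum.inl a) n = a) ∧
      (∀ β : B, ¬ IsStd ((p (Sum.inr β) : ℕ → M) : (hyperfilter ℕ : Filter ℕ).Product fun _ => M) ∧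
        ∀ i, i ∈ β.1 ↔
          digitB ((p (Sum.inr β) : ℕ → M) : (hyperfilter ℕ : Filter ℕ).Product fun _ => M) i) ∧
      (∀ x, ¬ IsStd ((c x : ℕ → M) : (hyperfilter ℕ : Filter ℕ).Product fun _ => M)) ∧
      ∀ (x : Set ℕ) (Y : Set (Set ℕ)), x ∉ Y → ∀ a ∈ hull (hyperfilter ℕ) p c Y,
        ¬ ∀ i, digitB ((c x : ℕ → M) : (hyperfilter ℕ : Filter ℕ).Product fun _ => M) i ↔
          digitB a i := by
  classical
  have : Countable B := hB
  let q (m : ℕ) : M ⊕ B → M :=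
    Sum.elim id fun β => numeral M (code fun i : Fin m => decide (i.1 ∈ β.1))
  have : Nonempty (Σ k, skolemArith.Term ((M ⊕ B) ⊕ Fin k)) :=
    ⟨⟨1, Term.var (Sum.inr 0)⟩⟩
  obtain ⟨e, he⟩ := exists_surjective_nat (Σ k, skolemArith.Term ((M ⊕ B) ⊕ Fin k))
  obtain ⟨h, hh⟩ := exists_independent_strings (fun s => (e s).1) fun s m w i =>
    decide (digitB ((e s).2.realize (Sum.elim (q m) fun j => numeral M (code (w j)))) i)
  choose m hm v hv using hh
  refine ⟨fun i n => q (m n) i, fun x n => numeral M (code (v n (node x n))), fun a n => rfl,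
    fun β => ⟨not_isStd_codes hM hm _, fun i => ?_⟩, fun x => not_isStd_codes hM hm _, ?_⟩
  · refine Iff.trans ?_ (digitB_codes hM hm _ i).symm
    have : ∀ᶠ n in hyperfilter ℕ, i < m n :=
      ((eventually_gt_atTop i).filter_mono Nat.hyperfilter_le_atTop).mono
        fun n hn => hn.trans_le (hm n)
    refine Iff.trans eventually_const.symm (eventually_congr (this.mono fun n hn => ?_))
    simp [bits, hn]
  · rintro x Y hx a ha hd
    obtain ⟨t, rfl⟩ := mem_hull.1 ha
    obtain ⟨k, t, y, rfl⟩ := exists_eq_relabel_fin t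
    obtain ⟨s, hs⟩ := he ⟨k, t⟩
    have hvs := fun n l hl hsl => hv n l hl s hsl
    beta_reduce at hvs
    rw [hs] at hvs
    obtain ⟨l, hsl, hinj⟩ :=
      exists_injOn_node ((Set.finite_range fun j => (y j).1).insert x) s
    have hev : ∀ᶠ n in hyperfilter ℕ, ∀ i < h l,
        (bits (v n (node x n)) i = true ↔ digitB (t.realize
          (Sum.elim (q (m n)) fun j => numeral M (code (v n (node (y j) n))))) i) := by
      refine (eventually_all_finite (Set.finite_Iio (h l))).2 fun i _ => ?_
      have hdi := (digitB_codes hM hm _ i).symm.trans ((hd i).trans (digitB_cast _ i))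
      simp only [termSeq, Term.realize_relabel, Sum.elim_comp_map, Function.comp_id] at hdi
      rw [iff_def, ← Ultrafilter.eventually_imp, ← Ultrafilter.eventually_imp,
        ← eventually_and] at hdi
      exact hdi.mono fun n hn => iff_def.2 hn
    obtain ⟨n, hn, hln⟩ :=
      (hev.and ((eventually_ge_atTop l).filter_mono Nat.hyperfilter_le_atTop)).exists
    obtain ⟨i, hi, hne⟩ := hvs n l hln hsl (fun j => y j) x hinj
      fun j hj => hx (hj ▸ (y j).2)
    refine hne ?_
    rw [Bool.eq_iff_iff, decide_eq_true_iff]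
    exact (hn i hi).symm

end Independence

end Arith

open Arith in
/-- (`ZFC + MA`) If `M` is a countable non-standard model of `PA`, `|A| < 2^ω`, and `B`
is countable with the Turing ideal generated by `SSy(M) ∪ B` disjoint from `A`, then
there is a family `(M_X : X ⊆ 2^ω)` of elementary extensions of `M` with
`B ⊆ SSy(M_X)`, `|M_X| = |SSy(M_X)| = max{ω, |X|}`, and
`X ⊆ Y ⟺ M_X ≼ M_Y ⟺ SSy(M_X) ⊆ SSy(M_Y)`. -/
theorem statement_13 (ma : MartinsAxiom)
    (M : Type) [arith.Structure M] (hM : NonstandardModel M) (hMc : Countable M)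
    (A : Set (Set ℕ)) (hA : Cardinal.mk A < 2 ^ Cardinal.aleph0)
    (B : Set (Set ℕ)) (hB : B.Countable)
    (hdisj : tIdealGen (SSy M ∪ B) ∩ A = ∅) :
    ∃ (N' : Type) (_ : arith.Structure N') (e : M ↪ₑ[arith] N')
      (Mfam : Set (Set ℕ) → arith.ElementarySubstructure N'),
      (∀ X : Set (Set ℕ), Set.range e ⊆ (Mfam X : Set N')) ∧
      (∀ X : Set (Set ℕ), B ⊆ SSy (Mfam X)) ∧
      (∀ X : Set (Set ℕ),
        Cardinal.mk (Mfam X) = max Cardinal.aleph0 (Cardinal.mk X) ∧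
        Cardinal.mk (SSy (Mfam X)) = max Cardinal.aleph0 (Cardinal.mk X)) ∧
      (∀ X Y : Set (Set ℕ),
        (X ⊆ Y ↔ (Mfam X : Set N') ⊆ (Mfam Y : Set N')) ∧
        (X ⊆ Y ↔ SSy (Mfam X) ⊆ SSy (Mfam Y))) := by
  have : Nonempty M := ⟨zeroM M⟩
  have hfin : (Set.range fun s : Finset ℕ => (s : Set ℕ)).Countable := Set.countable_range _
  have hB' : (B ∪ Set.range fun s : Finset ℕ => (s : Set ℕ)).Countable := hB.union hfin
  have : Countable ↥(B ∪ Set.range fun s : Finset ℕ => (s : Set ℕ)) := hB'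
  obtain ⟨p, c, hpM, hpB, hc, hind⟩ := exists_independent_generators hM.1 hB'
  let N := (Filter.hyperfilter ℕ : Filter ℕ).Product fun _ => M
  let H (X : Set (Set ℕ)) : arith.ElementarySubstructure N := hull (Filter.hyperfilter ℕ) p c X
  let G (x : Set ℕ) : Set ℕ := {i | digitB ((c x : ℕ → M) : N) i}
  have hBSSy (X) : (B ∪ Set.range fun s : Finset ℕ => (s : Set ℕ)) ⊆ SSy (H X) := fun Z hZ =>
    (mem_SSy_elementary _ Z).2 ⟨_, param_mem_hull (Sum.inr ⟨Z, hZ⟩), hpB ⟨Z, hZ⟩⟩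
  have hG {X x} : G x ∈ SSy (H X) ↔ x ∈ X := by
    refine ⟨fun h => ?_, fun hx => (mem_SSy_elementary _ _).2
      ⟨_, generator_mem_hull hx, hc x, fun i => Iff.rfl⟩⟩
    by_contra hx
    obtain ⟨a, ha, -, had⟩ := (mem_SSy_elementary _ _).1 h
    exact hind x X hx a ha had
  have hGinj : Function.Injective G := fun x y hxy => by
    have h : G x ∈ SSy (H {y}) := hxy ▸ hG.2 (Set.mem_singleton y)
    exact Set.mem_singleton_iff.1 (hG.1 h)
  have hmono {X Y} (h : (H X : Set N) ⊆ (H Y : Set N)) : SSy (H X) ⊆ SSy (H Y) := fun Z hZ => by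
    obtain ⟨a, ha, hZ⟩ := (mem_SSy_elementary _ Z).1 hZ
    exact (mem_SSy_elementary _ Z).2 ⟨a, h ha, hZ⟩
  have hsub {X Y} (h : SSy (H X) ⊆ SSy (H Y)) : X ⊆ Y := fun x hx => hG.1 (h (hG.2 hx))
  have hle (X : Set (Set ℕ)) : max Cardinal.aleph0 (Cardinal.mk X) ≤ Cardinal.mk (SSy (H X)) := by
    refine max_le ?_ ?_
    · rw [Cardinal.aleph0_le_mk_iff, Set.infinite_coe_iff]
      exact (Set.infinite_range_of_injective Finset.coe_injective).mono
        (Set.subset_union_right.trans (hBSSy X))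
    · exact Cardinal.mk_le_of_injective (f := fun x : X => (⟨G x, hG.2 x.2⟩ : SSy (H X)))
        fun x y hxy => Subtype.ext (hGinj (congrArg Subtype.val hxy))
  refine ⟨N, inferInstance, diagonal M _, H, fun X => ?_,
    fun X => Set.subset_union_left.trans (hBSSy X),
    fun X => ⟨le_antisymm mk_hull_le ((hle X).trans mk_SSy_le),
      le_antisymm (mk_SSy_le.trans mk_hull_le) (hle X)⟩,
    fun X Y => ⟨⟨hull_mono, fun h => hsub (hmono h)⟩,
      ⟨fun h => hmono (hull_mono h), hsub⟩⟩⟩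
  rintro _ ⟨a, rfl⟩
  have h : (p (Sum.inl a) : ℕ → M) = fun _ => a := funext (hpM a)
  have h' := param_mem_hull (u := Filter.hyperfilter ℕ) (p := p) (c := c) (X := X) (Sum.inl a)
  rw [h] at h'
  exact h'
end
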